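/- Let p ≡ −1 (mod 16) be a prime and let K = ℚ(⁴√p). Then the 2-primary part of the ideal class group of K is cyclic and the class number h_K is divisible by 4. -/

import Mathlib

open Polynomial NumberField

/-!
Let `σ` be the automorphism `⁴√p ↦ -⁴√p` of `K`, with fixed field `ℚ(√p)`. Among the virtual units
of `K`, the elements generating the square of a fractional ideal, those whose norm to `ℚ(√p)` is a
square have index at most `2`; among these, by Hilbert 90, those that are rational up to squares
have index at most `2`; and among the latter so do the elements `± y ^ 2`. The units of `K`, of rank
`2`, account for a factor `4` of this total index, which divides `8`; hence at most two ideal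
classes are killed by `2`.

For the divisibility, choose a prime `q ≡ 3 (mod 8)` modulo which `p` is a fourth power, and a prime
`Q` of `K` of norm `q`. If `4` does not divide the class number, then `Q ^ (2 * m) = (α)` for some
odd `m`, where `α` is a virtual unit prime to `σ α`, so that `α * σ α` is `g ^ 2` or `2 * g ^ 2`
with `g` in `ℚ(√p)`. Either case forces `q ^ m ≡ ± 1 (mod 8)`, which is absurd. In the first one,
`q ^ m` is up to squares, sign and a factor `2` the norm of an element of `K`, and the odd part of
such a norm is `± 1` modulo `8`. In the second one, write `α = u + v ⁴√p` with `u` and `v` in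
`ℚ(√p)`: then `q ^ m` and the norm of `v` have odd parts that agree up to sign modulo `8`, and `2`
is a square modulo every odd prime dividing the norm of `v` other than `p`.
-/

namespace PureQuartic

open Zsqrtd nonZeroDivisors

/-! ### Finite groups and rings -/

theorem relIndex_dvd_two_of_mul_mem {G : Type*} [Group G] {H L : Subgroup G}
    (h : ∀ a ∈ L, ∀ b ∈ L, a ∉ H → b ∉ H → a * b ∈ H) : H.relIndex L ∣ 2 := by
  by_cases hle : L ≤ H
  · rw [Subgroup.relIndex_eq_one.2 hle]
    exact one_dvd 2
  · obtain ⟨a, haL, haH⟩ := Set.not_subset.1 hle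
    rw [Subgroup.relIndex_eq_two_iff.2 ⟨a, haL, fun b hbL => ?_⟩]
    by_cases hbH : b ∈ H
    · exact .inr ⟨hbH, fun hba => haH ((Subgroup.mul_mem_cancel_left H hbH).1 hba)⟩
    · exact .inl ⟨h b hbL a haL hbH haH, hbH⟩

theorem mul_mem_of_relIndex_dvd_two {G : Type*} [Group G] {H L : Subgroup G}
    (h : H.relIndex L ∣ 2) {a b : G} (ha : a ∈ L) (hb : b ∈ L) (ha' : a ∉ H) (hb' : b ∉ H) :
    a * b ∈ H := by
  rcases (Nat.dvd_prime Nat.prime_two).1 h with h | h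
  · exact absurd (Subgroup.relIndex_eq_one.1 h ha) ha'
  · have hmul := Subgroup.mul_mem_iff_of_index_two (H := H.subgroupOf L) h
      (a := ⟨a, ha⟩) (b := ⟨b, hb⟩)
    simp only [Subgroup.mem_subgroupOf] at hmul
    exact hmul.2 (by simp [ha', hb'])

theorem card_comap_le {G G' : Type*} [Group G] [Group G'] [Finite G'] (f : G →* G')
    (H : Subgroup G') : Nat.card (H.comap f) ≤ Nat.card f.ker * Nat.card H := by
  have hker : f.ker ≤ H.comap f := Subgroup.comap_mono bot_le
  rw [← Subgroup.relIndex_bot_left, ← Subgroup.relIndex_mul_relIndex _ _ _ bot_le hker,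
    Subgroup.relIndex_bot_left, Subgroup.relIndex_ker]
  exact Nat.mul_le_mul_left _ (Subgroup.card_le_of_le (Subgroup.map_comap_le f H))

theorem card_powMonoidHom_pow_ker_le {G : Type*} [CommGroup G] [Finite G] {p : ℕ}
    (h : Nat.card (powMonoidHom p : G →* G).ker ≤ p) (k : ℕ) :
    Nat.card (powMonoidHom (p ^ k) : G →* G).ker ≤ p ^ k := by
  induction k with
  | zero => exact (Finite.card_le_one_iff_subsingleton.2 ⟨fun a b => Subtype.ext <| by
      simpa using (MonoidHom.mem_ker.1 a.2).trans (MonoidHom.mem_ker.1 b.2).symm⟩)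
  | succ k ih =>
    have hcomap : (powMonoidHom (p ^ (k + 1)) : G →* G).ker =
        (powMonoidHom (p ^ k) : G →* G).ker.comap (powMonoidHom p) := by
      ext a
      simp [MonoidHom.mem_ker, ← pow_mul, pow_succ']
    rw [hcomap, pow_succ']
    exact (card_comap_le _ _).trans (Nat.mul_le_mul h ih)

theorem isCyclic_of_card_powMonoidHom_ker_le {G : Type*} [CommGroup G] [Finite G] {p : ℕ}
    [Fact p.Prime] (hG : IsPGroup p G) (h : Nat.card (powMonoidHom p : G →* G).ker ≤ p) :
    IsCyclic G := by
  classical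
  have := Fintype.ofFinite G
  obtain ⟨m, hm⟩ := IsPGroup.iff_card.1 hG
  refine isCyclic_of_card_pow_eq_one_le fun n hn => ?_
  obtain ⟨k, -, hk⟩ := (Nat.dvd_prime_pow (Fact.out : p.Prime)).1 (n.gcd_dvd_right (p ^ m))
  have hpow (a : G) (ha : a ^ n = 1) : a ^ p ^ k = 1 := by
    rw [← hk, ← orderOf_dvd_iff_pow_eq_one]
    exact Nat.dvd_gcd (orderOf_dvd_iff_pow_eq_one.2 ha) (hm ▸ orderOf_dvd_natCard a)
  calc Finset.card {a : G | a ^ n = 1}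
      ≤ Finset.card {a : G | a ^ p ^ k = 1} :=
        Finset.card_le_card (Finset.monotone_filter_right _ fun a _ => hpow a)
    _ = Nat.card (powMonoidHom (p ^ k) : G →* G).ker := by
        rw [← Fintype.card_subtype, ← Nat.card_eq_fintype_card]
        rfl
    _ ≤ p ^ k := card_powMonoidHom_pow_ker_le h k
    _ ≤ n := hk ▸ Nat.gcd_le_left _ hn

theorem isCyclic_sylow_of_card_powMonoidHom_ker_le {G : Type*} [CommGroup G] [Finite G] {p : ℕ}
    [Fact p.Prime] (h : Nat.card (powMonoidHom p : G →* G).ker ≤ p) (P : Sylow p G) :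
    IsCyclic P := by
  refine isCyclic_of_card_powMonoidHom_ker_le P.isPGroup' (le_trans ?_ h)
  refine Nat.card_le_card_of_injective (fun a => ⟨a.1, ?_⟩) fun a b hab => ?_
  · exact congrArg Subtype.val (MonoidHom.mem_ker.1 a.2)
  · exact Subtype.ext (Subtype.ext (congrArg (fun x => x.1) hab))

theorem card_powMonoidHom_two_ker_le {G : Type*} [CommGroup G]
    (h : ∀ a b : G, a ^ 2 = 1 → b ^ 2 = 1 → a ≠ 1 → b ≠ 1 → a = b) :
    Nat.card (powMonoidHom 2 : G →* G).ker ≤ 2 := by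
  obtain ⟨c, hc⟩ : ∃ c : G, ∀ a : G, a ^ 2 = 1 → a ∈ ({1, c} : Set G) := by
    by_cases hex : ∃ c : G, c ^ 2 = 1 ∧ c ≠ 1
    · obtain ⟨c, hc, hc1⟩ := hex
      exact ⟨c, fun a ha => or_iff_not_imp_left.2 fun ha1 => h a c ha hc ha1 hc1⟩
    · push Not at hex
      exact ⟨1, fun a ha => .inl (hex a ha)⟩
  exact (Nat.card_mono (Set.toFinite _) fun a ha => hc a (MonoidHom.mem_ker.1 ha)).trans
    ((Set.ncard_insert_le 1 {c}).trans (by rw [Set.ncard_singleton]))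

/-- `R = R⁺ ⊕ t R⁺`, where `R⁺` is the subring of fixed points. -/
theorem isSquare_card_of_involutive {R : Type*} [CommRing R] {τ : R →+* R}
    (hτ : Function.Involutive τ) {t : R} (ht : IsUnit t) (hτt : τ t = -t)
    (h2 : IsUnit (2 : R)) : IsSquare (Nat.card R) := by
  obtain ⟨u, hu⟩ := ht.exists_right_inv
  obtain ⟨v, hv⟩ := h2.exists_right_inv
  have hτu : τ u = -u := by
    have h1 : τ t * τ u = 1 := by rw [← map_mul, hu, map_one]
    rw [hτt] at h1
    linear_combination (-u) * h1 - τ u * hu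
  have hτv : τ v = v := by
    have h1 : 2 * τ v = 1 := by rw [← map_ofNat τ 2, ← map_mul, hv, map_one]
    linear_combination v * h1 - τ v * hv
  let fixed := {x : R // τ x = x}
  let f : fixed × fixed → R := fun x => x.1.1 + t * x.2.1
  suffices hf : f.Bijective from
    ⟨Nat.card fixed, by rw [← Nat.card_congr (Equiv.ofBijective f hf), Nat.card_prod]⟩
  constructor
  · rintro ⟨⟨x, hx⟩, ⟨y, hy⟩⟩ ⟨⟨x', hx'⟩, ⟨y', hy'⟩⟩ (h : x + t * y = x' + t * y')
    have h' := congrArg τ h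
    simp only [map_add, map_mul, hx, hy, hx', hy', hτt] at h'
    obtain rfl : x = x' := by linear_combination v * h + v * h' - (x - x') * hv
    obtain rfl : y = y' := by linear_combination u * h - (y - y') * hu
    rfl
  · refine fun z => ⟨⟨⟨v * (z + τ z), ?_⟩, ⟨v * u * (z - τ z), ?_⟩⟩, ?_⟩
    · rw [map_mul, map_add, hτ, hτv]
      ring
    · rw [map_mul, map_mul, map_sub, hτ, hτv, hτu]
      ring
    · change v * (z + τ z) + t * (v * u * (z - τ z)) = z
      linear_combination v * (z - τ z) * hu + z * hv

/-! ### The odd part modulo `8` -/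

/-- The quadratic character `χ₈` evaluated at the odd part of `|n|`, extended by `0` to `n = 0`.
It is the character of `ℚ` with kernel generated by squares, `±1`, `2` and the primes
`≡ ±1 (mod 8)`, and it vanishes nowhere else than at `0`. -/
noncomputable def oddPartChar : ℤ →*₀ ℤ where
  toFun n := ZMod.χ₈ ((ordCompl[2] n.natAbs : ℕ) : ZMod 8)
  map_zero' := by simp
  map_one' := by simp
  map_mul' m n := by rw [Int.natAbs_mul, Nat.ordCompl_mul, Nat.cast_mul, map_mul]

theorem oddPartChar_apply (n : ℤ) :
    oddPartChar n = ZMod.χ₈ ((ordCompl[2] n.natAbs : ℕ) : ZMod 8) := rfl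

theorem oddPartChar_of_odd {n : ℤ} (hn : Odd n) :
    oddPartChar n = if n % 8 = 1 ∨ n % 8 = 7 then 1 else -1 := by
  rw [Int.odd_iff] at hn
  have h2 : ¬ 2 ∣ n.natAbs := by lia
  rw [oddPartChar_apply, (Nat.ordCompl_eq_self_iff_zero_or_not_dvd _ Nat.prime_two).2 (.inr h2),
    ZMod.χ₈_nat_eq_if_mod_eight, if_neg (by lia)]
  exact if_congr (by lia) rfl rfl

theorem oddPartChar_eq_one {n : ℤ} (h : n % 8 = 1 ∨ n % 8 = 7) : oddPartChar n = 1 := by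
  rw [oddPartChar_of_odd (Int.odd_iff.2 (by lia)), if_pos h]

theorem oddPartChar_eq_neg_one {n : ℤ} (h : n % 8 = 3 ∨ n % 8 = 5) : oddPartChar n = -1 := by
  rw [oddPartChar_of_odd (Int.odd_iff.2 (by lia)), if_neg (by lia)]

theorem oddPartChar_two : oddPartChar 2 = 1 := by
  have h : ordCompl[2] 2 = 1 := by simpa using Nat.ordCompl_self_pow (k := 1) Nat.prime_two
  change ZMod.χ₈ ((ordCompl[2] 2 : ℕ) : ZMod 8) = 1
  rw [h, Nat.cast_one, map_one]

theorem oddPartChar_neg (n : ℤ) : oddPartChar (-n) = oddPartChar n := by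
  rw [oddPartChar_apply, Int.natAbs_neg, oddPartChar_apply]

theorem oddPartChar_sq {n : ℤ} (hn : n ≠ 0) : oddPartChar (n ^ 2) = 1 := by
  obtain ⟨k, m, hm, hk⟩ := Nat.exists_eq_two_pow_mul_odd (Int.natAbs_ne_zero.2 hn)
  have hm8 := Int.eight_dvd_sq_sub_one_of_odd (k := m) (by exact_mod_cast hm)
  rw [← Int.natAbs_sq, hk]
  push_cast
  rw [mul_pow, ← pow_mul, map_mul, map_pow, oddPartChar_two, one_pow, one_mul,
    oddPartChar_eq_one (by lia)]

theorem oddPartChar_eq_one_of_prime {n : ℤ} (hn : n ≠ 0)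
    (h : ∀ l : ℕ, l.Prime → (l : ℤ) ∣ n → oddPartChar l = 1) : oddPartChar n = 1 := by
  suffices hnat : ∀ m : ℕ, m ≠ 0 → (∀ l : ℕ, l.Prime → l ∣ m → oddPartChar l = 1) →
      oddPartChar m = 1 by
    have habs := hnat n.natAbs (Int.natAbs_ne_zero.2 hn) fun l hl hln =>
      h l hl (Int.natCast_dvd.2 hln)
    rcases Int.natAbs_eq n with h' | h' <;> rw [h'] <;> simpa [oddPartChar_neg] using habs
  intro m
  induction m using Nat.recOnMul with
  | zero => exact fun h0 => absurd rfl h0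
  | one => simp
  | prime l hl => exact fun _ h => h l hl dvd_rfl
  | mul a b iha ihb =>
    intro hab h
    have ha := iha (left_ne_zero_of_mul hab) fun l hl hla => h l hl (hla.mul_right b)
    have hb := ihb (right_ne_zero_of_mul hab) fun l hl hlb => h l hl (hlb.mul_left a)
    rw [Nat.cast_mul, map_mul, ha, hb, one_mul]

/-- The multiplicative extension of `oddPartChar` to the rational numbers. -/
noncomputable def oddPartCharRat : ℚ →*₀ ℤ where
  toFun x := oddPartChar (x.num * x.den)
  map_zero' := by simp
  map_one' := by simp
  map_mul' x y := by
    have h := congrArg (fun n : ℤ => oddPartChar n) (Rat.mul_num_den' x y)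
    simp only [map_mul] at h ⊢
    have hsq (z : ℚ) : oddPartChar z.den * oddPartChar z.den = 1 := by
      rw [← map_mul, ← sq, oddPartChar_sq (by exact_mod_cast z.den_ne_zero)]
    linear_combination oddPartChar x.den * oddPartChar y.den * oddPartChar (x * y).den * h -
      oddPartChar (x * y).num * oddPartChar (x * y).den *
        (oddPartChar x.den ^ 2 * hsq y + hsq x) +
      oddPartChar x.num * oddPartChar x.den * oddPartChar y.num * oddPartChar y.den * hsq (x * y)

@[simp]
theorem oddPartCharRat_intCast (n : ℤ) : oddPartCharRat n = oddPartChar n := by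
  simp [oddPartCharRat]

/-! ### Norms from quadratic orders -/

section QuadraticOrder

variable {d : ℤ}

/-- In the applications `y` is `x` times `(1 + √d) / 2`, of norm `(1 - d) / 4`, which removes a
factor `2` from the norm. -/
theorem two_adic_descent {α : Type*} (N : α → ℤ) {P : α → Prop}
    (odd : ∀ x, Odd (N x) → P x)
    (even : ∀ x, Even (N x) → ∃ y r, Odd r ∧ 2 * N y = r * N x ∧ (P y → P x))
    {x : α} (hx : N x ≠ 0) : P x := by
  suffices h : ∀ (k : ℕ) (x : α), ¬ 2 ^ k ∣ N x → P x by
    obtain ⟨k, hk⟩ := Int.finiteMultiplicity_iff.2 ⟨show (2 : ℤ).natAbs ≠ 1 by decide, hx⟩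
    exact h _ x hk
  intro k
  induction k with
  | zero => exact fun x h => absurd (one_dvd _) h
  | succ k ih =>
    intro x hk
    rcases Int.even_or_odd (N x) with hev | hodd
    · obtain ⟨y, r, hr, hyx, hP⟩ := even x hev
      refine hP (ih y fun hy => hk ?_)
      have hcop : IsCoprime 2 r := ⟨-(r / 2), 1, by rw [Int.odd_iff] at hr; lia⟩
      refine hcop.pow_left.dvd_of_dvd_mul_left (hyx ▸ ?_)
      rw [pow_succ']
      exact mul_dvd_mul_left 2 hy
    · exact odd x hodd

theorem even_norm_iff (hd : Odd d) (z : ℤ√d) : Even z.norm ↔ Even (z.re + z.im) := by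
  rw [norm_def, Int.even_sub, Int.even_add]
  simp only [Int.even_mul, Int.not_even_iff_odd.2 hd, false_or, or_self]

theorem exists_two_mul_eq (hd : Odd d) {z : ℤ√d} (hz : Even (z.re + z.im)) :
    ∃ z', 2 * z' = (1 + sqrtd) * z := by
  have hre : Even (z.re + d * z.im) := by
    rwa [Int.even_add, Int.even_mul, or_iff_right (Int.not_even_iff_odd.2 hd), ← Int.even_add]
  obtain ⟨x, hx⟩ := even_iff_two_dvd.1 hre
  obtain ⟨y, hy⟩ := even_iff_two_dvd.1 hz
  refine ⟨⟨x, y⟩, Zsqrtd.ext ?_ ?_⟩ <;> simp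
  · lia
  · lia

theorem two_mul_norm_of_two_mul_eq {t : ℤ} (hd : d = 2 * t + 1) {z z' : ℤ√d}
    (h : 2 * z' = (1 + sqrtd) * z) : 2 * z'.norm = -t * z.norm := by
  have hnorm := congrArg Zsqrtd.norm h
  rw [norm_mul, norm_mul, norm_def 2, norm_def (1 + sqrtd)] at hnorm
  simp only [re_ofNat, im_ofNat, re_add, im_add, re_one, im_one, re_sqrtd, im_sqrtd] at hnorm
  norm_num at hnorm
  subst hd
  linarith

theorem oddPartChar_norm_of_two_mul_eq (hd : d % 16 = 15) {z z' : ℤ√d}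
    (h : 2 * z' = (1 + sqrtd) * z) : oddPartChar z'.norm = oddPartChar z.norm := by
  have hnorm := two_mul_norm_of_two_mul_eq (t := d / 2) (by lia) h
  simpa [oddPartChar_two, oddPartChar_neg, oddPartChar_eq_one (n := d / 2) (by lia)]
    using congrArg oddPartChar hnorm

theorem four_dvd_sq_add_mul_sq (hd : d % 4 = 3) {x y : ℤ} (hxy : Even (x + y)) :
    4 ∣ x ^ 2 + d * y ^ 2 := by
  obtain ⟨k, hk⟩ := hxy
  obtain ⟨l, hl⟩ : 4 ∣ d + 1 := by lia
  exact ⟨k * (k - y) + l * y ^ 2, by linear_combination (x - y + 2 * k) * hk + y ^ 2 * hl⟩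

theorem norm_sq_sub (u v : ℤ√d) : (u ^ 2 - sqrtd * v ^ 2).norm =
    (u.re ^ 2 + d * u.im ^ 2 - 2 * (d * (v.re * v.im))) ^ 2
      - d * (2 * (u.re * u.im) - (v.re ^ 2 + d * v.im ^ 2)) ^ 2 := by
  rw [norm_def]
  simp only [sq, re_sub, re_mul, re_sqrtd, im_sub, im_mul, im_sqrtd]
  ring

theorem norm_sq_sub_emod_eight (hd : d % 8 = 7) {u v : ℤ√d}
    (h : Odd (u ^ 2 - sqrtd * v ^ 2).norm) : (u ^ 2 - sqrtd * v ^ 2).norm % 8 = 1 := by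
  rw [norm_sq_sub] at h ⊢
  obtain ⟨a, c⟩ := u
  obtain ⟨b, e⟩ := v
  dsimp only at h ⊢
  obtain ⟨A, hA⟩ : ∃ A, A = a ^ 2 + d * c ^ 2 - 2 * (d * (b * e)) := ⟨_, rfl⟩
  obtain ⟨B, hB⟩ : ∃ B, B = 2 * (a * c) - (b ^ 2 + d * e ^ 2) := ⟨_, rfl⟩
  rw [← hA, ← hB] at h ⊢
  have hdodd : ¬ Even d := Int.not_even_iff_odd.2 (Int.odd_iff.2 (by lia))
  have hAB : Even A ↔ ¬ Even B := by
    rw [← Int.not_even_iff_odd, Int.even_sub, Int.even_mul] at h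
    simp only [Int.even_pow, hdodd, false_or] at h
    tauto
  have hAiff : Even A ↔ Even (a + c) := by
    simp [hA, Int.even_sub, Int.even_add, Int.even_mul, Int.even_pow, hdodd]
  have hBiff : Even B ↔ Even (b + e) := by
    simp [hB, Int.even_sub, Int.even_add, Int.even_mul, Int.even_pow, hdodd]
  suffices hdvd : 8 ∣ A ^ 2 - d * B ^ 2 - 1 by lia
  obtain ⟨l, hl⟩ : 8 ∣ d + 1 := by lia
  by_cases hAe : Even A
  · obtain ⟨k, hk⟩ := four_dvd_sq_add_mul_sq (d := d) (by lia) (hAiff.1 hAe)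
    obtain ⟨n, hn⟩ : Even (b * e) := by
      have := mt hBiff.2 (hAB.1 hAe)
      grind
    obtain ⟨m, hm⟩ := Int.eight_dvd_sq_sub_one_of_odd (Int.not_even_iff_odd.1 (hAB.1 hAe))
    refine ⟨2 * (k - d * n) ^ 2 - d * m - l, ?_⟩
    have hA4 : A = 4 * (k - d * n) := by linear_combination hA + hk - 2 * d * hn
    linear_combination (A + 4 * (k - d * n)) * hA4 - d * hm - hl
  · obtain ⟨k, hk⟩ := four_dvd_sq_add_mul_sq (d := d) (by lia) (hBiff.1 (by tauto))
    obtain ⟨n, hn⟩ : Even (a * c) := by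
      have := mt hAiff.2 hAe
      grind
    obtain ⟨m, hm⟩ := Int.eight_dvd_sq_sub_one_of_odd (Int.not_even_iff_odd.1 hAe)
    refine ⟨m - 2 * d * (n - k) ^ 2, ?_⟩
    have hB4 : B = 4 * (n - k) := by linear_combination hB - hk + 2 * hn
    linear_combination hm - d * (B + 4 * (n - k)) * hB4

theorem even_norm_sq_sub_iff (hd : Odd d) (u v : ℤ√d) :
    Even (u ^ 2 - sqrtd * v ^ 2).norm ↔ Even (u.re + u.im + (v.re + v.im)) := by
  rw [even_norm_iff hd]
  have hd' := Int.not_even_iff_odd.2 hd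
  simp only [sq, re_sub, re_mul, re_sqrtd, im_sub, im_mul, im_sqrtd, Int.even_add, Int.even_sub,
    Int.even_mul, hd']
  grind

theorem oddPartChar_norm_sq_sub (hd : d % 16 = 15) {u v : ℤ√d}
    (h : (u ^ 2 - sqrtd * v ^ 2).norm ≠ 0) :
    oddPartChar (u ^ 2 - sqrtd * v ^ 2).norm = 1 := by
  have hodd : Odd d := Int.odd_iff.2 (by lia)
  refine two_adic_descent (α := (ℤ√d) × (ℤ√d))
    (P := fun x => oddPartChar (x.1 ^ 2 - sqrtd * x.2 ^ 2).norm = 1)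
    (fun x => (x.1 ^ 2 - sqrtd * x.2 ^ 2).norm)
    (fun x hx => oddPartChar_eq_one (.inl (norm_sq_sub_emod_eight (by lia) hx))) ?_
    (x := (u, v)) h
  rintro ⟨u, v⟩ hx
  dsimp only at hx ⊢
  have huv := (even_norm_sq_sub_iff hodd u v).1 hx
  obtain ⟨u', hu'⟩ := exists_two_mul_eq hodd (z := u - sqrtd * v) (by
    simp [Int.even_add, Int.even_sub, Int.even_mul, Int.not_even_iff_odd.2 hodd] at huv ⊢
    tauto)
  obtain ⟨v', hv'⟩ := exists_two_mul_eq hodd (z := v - u) (by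
    simp [Int.even_add, Int.even_sub] at huv ⊢
    tauto)
  obtain ⟨t, ht⟩ := hodd
  have hs : (sqrtd * sqrtd : ℤ√d) = 2 * ((t : ℤ) : ℤ√d) + 1 := by
    rw [dmuld]
    exact_mod_cast congrArg (Int.cast : ℤ → ℤ√d) ht
  have hδ : 2 * (u' ^ 2 - sqrtd * v' ^ 2) =
      (1 + sqrtd) * (((-t : ℤ) : ℤ√d) * (u ^ 2 - sqrtd * v ^ 2)) := by
    refine Zsqrtd.eq_of_smul_eq_smul_left two_ne_zero ?_
    push_cast
    linear_combination (2 * u' + (1 + sqrtd) * (u - sqrtd * v)) * hu'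
      - sqrtd * (2 * v' + (1 + sqrtd) * (v - u)) * hv' - (1 + sqrtd) * (u ^ 2 - sqrtd * v ^ 2) * hs
  have hnorm := two_mul_norm_of_two_mul_eq ht hδ
  rw [Zsqrtd.norm_mul, norm_intCast] at hnorm
  have ht8 : oddPartChar t = 1 := oddPartChar_eq_one (by lia)
  refine ⟨(u', v'), -t * (-t * -t), ?_, by linarith, fun h' => ?_⟩
  · have ht2 : Odd t := Int.odd_iff.2 (by lia)
    exact ht2.neg.mul (ht2.neg.mul ht2.neg)
  · simpa [oddPartChar_two, oddPartChar_neg, ht8, h'] using (congrArg oddPartChar hnorm).symm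

theorem exists_ringHom_zmod_eq_zero {v : ℤ√d} (hv : IsCoprime v.re v.im) {l : ℕ}
    [Fact l.Prime] (hl : (l : ℤ) ∣ v.norm) : ∃ φ : ℤ√d →+* ZMod l, φ v = 0 := by
  have hnorm : (v.re : ZMod l) * v.re = d * (v.im * v.im) := by
    have := (ZMod.intCast_zmod_eq_zero_iff_dvd _ l).2 hl
    rw [norm_def] at this
    push_cast at this
    linear_combination this
  have him : (v.im : ZMod l) ≠ 0 := by
    intro h0
    obtain ⟨x, y, hxy⟩ := hv
    rw [h0, mul_zero, mul_zero, mul_self_eq_zero] at hnorm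
    simpa [hnorm, h0] using congrArg (Int.cast : ℤ → ZMod l) hxy
  refine ⟨lift ⟨-(v.re / v.im), ?_⟩, ?_⟩
  · field_simp
    linear_combination hnorm
  · rw [lift_apply_apply]
    field_simp
    ring

theorem oddPartChar_norm_of_sq_sub_eq (hd : ∀ l : ℕ, l.Prime → (l : ℤ) ∣ d → oddPartChar l = 1)
    {u v g w w' : ℤ√d} (h : u ^ 2 - sqrtd * v ^ 2 = 2 * g ^ 2) {i j : ℕ}
    (hw : w * u + w' * v = 2 ^ i * (d : ℤ√d) ^ j) (hv : v.norm ≠ 0) :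
    oddPartChar v.norm = 1 := by
  have hgcd : 0 < Int.gcd v.re v.im := by
    refine Int.gcd_pos_iff.2 ?_
    by_contra! h0
    exact hv (by rw [norm_def, h0.1, h0.2]; ring)
  obtain ⟨v', hv', hcop⟩ := exists_coprime_of_gcd_pos hgcd
  have hm0 : ((Int.gcd v.re v.im : ℕ) : ℤ) ≠ 0 := by positivity
  generalize (Int.gcd v.re v.im : ℤ) = m at hv' hm0
  subst hv'
  rw [Zsqrtd.norm_mul, norm_intCast, ← sq] at hv ⊢
  rw [map_mul, oddPartChar_sq hm0, one_mul]
  refine oddPartChar_eq_one_of_prime (right_ne_zero_of_mul hv) fun l hl hlv => ?_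
  have := Fact.mk hl
  rcases hl.eq_two_or_odd' with rfl | hodd
  · exact_mod_cast oddPartChar_two
  obtain ⟨φ, hφ⟩ := exists_ringHom_zmod_eq_zero hcop hlv
  have hsq : φ u ^ 2 = 2 * φ g ^ 2 := by
    simpa only [map_sub, map_mul, map_pow, map_ofNat, hφ, mul_zero, sub_zero, ne_eq,
      OfNat.ofNat_ne_zero, not_false_eq_true, zero_pow] using congrArg φ h
  have hl2 : l ≠ 2 := by
    rintro rfl
    exact absurd hodd (by decide)
  have h2 : (2 : ZMod l) ≠ 0 := Ring.two_ne_zero (by rwa [ZMod.ringChar_zmod_n])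
  by_cases hu : φ u = 0
  · refine hd l hl ((ZMod.intCast_zmod_eq_zero_iff_dvd _ l).1 ?_)
    have hcomb : (2 : ZMod l) ^ i * (d : ZMod l) ^ j = 0 := by
      simpa only [map_add, map_mul, map_pow, map_ofNat, map_intCast, hφ, hu, mul_zero, add_zero]
        using (congrArg φ hw).symm
    exact eq_zero_of_pow_eq_zero ((mul_eq_zero.1 hcomb).resolve_left (pow_ne_zero i h2))
  · have hg : φ g ≠ 0 := by
      rintro h0
      exact hu (by simpa [h0] using hsq)
    have hl8 := (ZMod.exists_sq_eq_two_iff hl2).1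
      ⟨φ u / φ g, by field_simp; exact hsq.symm⟩
    exact oddPartChar_eq_one (by lia)

theorem oddPartChar_eq_iff {m n : ℤ} (hm : Odd m) (hn : Odd n) :
    oddPartChar m = oddPartChar n ↔ 16 ∣ m ^ 2 - n ^ 2 := by
  have sq_eq {x : ℤ} (hx : Odd x) : oddPartChar x = 1 ∧ (∃ k, x ^ 2 = 16 * k + 1) ∨
      oddPartChar x = -1 ∧ ∃ k, x ^ 2 = 16 * k + 9 := by
    obtain ⟨q, r, rfl, hr⟩ : ∃ q r, x = 8 * q + r ∧ (r = 1 ∨ r = -1 ∨ r = 3 ∨ r = -3) :=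
      ⟨(x + 3) / 8, x - 8 * ((x + 3) / 8), by ring, by rw [Int.odd_iff] at hx; lia⟩
    rcases hr with rfl | rfl | rfl | rfl
    · exact .inl ⟨oddPartChar_eq_one (by lia), 4 * q ^ 2 + q, by ring⟩
    · exact .inl ⟨oddPartChar_eq_one (by lia), 4 * q ^ 2 - q, by ring⟩
    · exact .inr ⟨oddPartChar_eq_neg_one (by lia), 4 * q ^ 2 + 3 * q, by ring⟩
    · exact .inr ⟨oddPartChar_eq_neg_one (by lia), 4 * q ^ 2 - 3 * q, by ring⟩
  rcases sq_eq hm with ⟨hX, k, hk⟩ | ⟨hX, k, hk⟩ <;>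
  rcases sq_eq hn with ⟨hX', l, hl⟩ | ⟨hX', l, hl⟩ <;>
  · rw [hX, hX', hk, hl]
    lia

theorem sq_sub_mul_sq_parity (hd : d % 4 = 3) {a b c e G H : ℤ} (hGH : Odd (G + H))
    (hre : a ^ 2 + d * c ^ 2 - 2 * (d * (b * e)) = 2 * (G ^ 2 + d * H ^ 2))
    (him : 2 * (a * c) - (b ^ 2 + d * e ^ 2) = 4 * (G * H)) :
    (Even a ∧ Even c) ∧ Odd b ∧ Odd e := by
  have hdodd : ¬ Even d := Int.not_even_iff_odd.2 (Int.odd_iff.2 (by lia))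
  have hbe : Even (b + e) := by
    have : Even (b ^ 2 + d * e ^ 2) := ⟨a * c - 2 * (G * H), by linear_combination -him⟩
    simpa [Int.even_add, Int.even_mul, Int.even_pow, hdodd] using this
  have hac : Even (a + c) := by
    have : Even (a ^ 2 + d * c ^ 2) := ⟨G ^ 2 + d * H ^ 2 + d * (b * e), by linear_combination hre⟩
    simpa [Int.even_add, Int.even_mul, Int.even_pow, hdodd] using this
  have hT : ¬ Even (G ^ 2 + d * H ^ 2) := by
    simpa [Int.even_add, Int.even_mul, Int.even_pow, hdodd] using Int.not_even_iff_odd.2 hGH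
  obtain ⟨k, hk⟩ := four_dvd_sq_add_mul_sq hd hbe
  obtain ⟨l, hl⟩ := four_dvd_sq_add_mul_sq hd hac
  have hbe' : ¬ Even (b * e) := by
    rintro ⟨y, hy⟩
    exact hT ⟨l - d * y, by rw [hy] at hre; linarith⟩
  have hac' : Even (a * c) := ⟨k + G * H, by linarith⟩
  grind

theorem eight_mul_sq_eq_and_pow_four_eq_one {x : ℤ} (hx : Odd x) :
    8 * (x : ZMod 16) ^ 2 = 8 ∧ (x : ZMod 16) ^ 4 = 1 := by
  obtain ⟨y, hy⟩ := Int.eight_dvd_sq_sub_one_of_odd hx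
  have h16 : (16 : ZMod 16) = 0 := rfl
  replace hy := congrArg (Int.cast : ℤ → ZMod 16) hy
  push_cast at hy
  constructor
  · linear_combination 8 * hy + 4 * (y : ZMod 16) * h16
  · linear_combination ((x : ZMod 16) ^ 2 + 1 + 8 * y) * hy + (4 * y ^ 2 + y : ZMod 16) * h16

theorem sq_eq_sq_of_sixteen_eq_zero {R : Type*} [CommRing R] (h16 : (16 : R) = 0)
    {A C b e G H n : R} (he8 : 8 * e ^ 2 = 8) (he4 : e ^ 4 = 1) (hGH8 : 8 * (G + H) ^ 2 = 8)
    (hGH4 : (G + H) ^ 4 = 1) (hn : G * H = 2 * n)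
    (hre : 2 * (A ^ 2 - C ^ 2) + b * e = G ^ 2 - H ^ 2)
    (him : 8 * (A * C) - (b ^ 2 - e ^ 2) = 4 * (G * H))
    (hAC : (∃ w, A + C = 2 * w) ∨ ∃ z, A * C = 2 * z) :
    (4 * (A * C - n) + e ^ 2) ^ 2 = (G ^ 2 + H ^ 2) ^ 2 := by
  have hM : (4 * (A * C - n) + e ^ 2) ^ 2 = 8 * (A * C - n) + 1 := by
    linear_combination (A * C - n) ^ 2 * h16 + (A * C - n) * he8 + he4
  rcases hAC with ⟨w, hw⟩ | ⟨z, hz⟩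
  · have hN : G ^ 2 - H ^ 2 = 8 * (w * (w - C)) + b * e := by
      linear_combination -hre + 2 * (A - C + 2 * w) * hw
    have hbe : (b * e) ^ 2 = 8 * (A * C - n) + 1 := by
      linear_combination -e ^ 2 * him + (A * C - n) * he8 + he4 - 4 * e ^ 2 * hn
    have hN2 : (G ^ 2 - H ^ 2) ^ 2 = (b * e) ^ 2 := by
      rw [hN]
      linear_combination (4 * (w * (w - C)) ^ 2 + w * (w - C) * (b * e)) * h16
    linear_combination hM - hN2 - hbe - 4 * (G * H + 2 * n) * hn - n ^ 2 * h16
  · have hN2 : (G ^ 2 + H ^ 2) ^ 2 = 1 - 8 * n := by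
      linear_combination hGH4 - n * hGH8 + n ^ 2 * h16
        - 2 * (G ^ 2 + H ^ 2 + (G + H) ^ 2 - 4 * n) * hn
    linear_combination hM - hN2 + 8 * hz + z * h16

theorem oddPartChar_sq_sub_mul_sq (hd : d % 16 = 15) {A C b e G H : ℤ} (hGH : Odd (G + H))
    (he : Odd e) (hre : 2 * (A ^ 2 + d * C ^ 2) - d * (b * e) = G ^ 2 + d * H ^ 2)
    (him : 8 * (A * C) - (b ^ 2 + d * e ^ 2) = 4 * (G * H)) :
    oddPartChar (b ^ 2 - d * e ^ 2) = oddPartChar (G ^ 2 - d * H ^ 2) := by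
  have hdodd : ¬ Even d := Int.not_even_iff_odd.2 (Int.odd_iff.2 (by lia))
  have hd' : (d : ZMod 16) = -1 := by
    exact_mod_cast (ZMod.intCast_eq_intCast_iff_dvd_sub d (-1) 16).2 (by lia)
  obtain ⟨n, hn⟩ : ∃ n, G * H = 2 * n := even_iff_exists_two_mul.1 (by grind)
  have hAC : (∃ w, A + C = 2 * w) ∨ ∃ z, A * C = 2 * z := by
    simp only [← even_iff_exists_two_mul]
    grind
  obtain ⟨M, hM⟩ : ∃ M, M = 4 * (A * C - n) - d * e ^ 2 := ⟨_, rfl⟩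
  have hbe : b ^ 2 - d * e ^ 2 = 2 * M := by linear_combination -him - 4 * hn - 2 * hM
  have hMo : Odd M := by
    rw [← Int.not_even_iff_odd] at he ⊢
    simpa [hM, Int.even_sub, Int.even_mul, Int.even_pow, hdodd, show Even (4 : ℤ) by decide]
      using he
  have hNo : Odd (G ^ 2 - d * H ^ 2) := by
    rw [← Int.not_even_iff_odd] at hGH ⊢
    simpa [Int.even_sub, Int.even_add, Int.even_mul, Int.even_pow, hdodd] using hGH
  rw [hbe, map_mul, oddPartChar_two, one_mul, oddPartChar_eq_iff hMo hNo]
  refine (ZMod.intCast_zmod_eq_zero_iff_dvd _ 16).1 ?_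
  obtain ⟨he8, he4⟩ := eight_mul_sq_eq_and_pow_four_eq_one he
  obtain ⟨hGH8, hGH4⟩ := eight_mul_sq_eq_and_pow_four_eq_one hGH
  have hcast {x y : ℤ} (h : x = y) : (x : ZMod 16) = y := congrArg Int.cast h
  have hre' := hcast hre
  have him' := hcast him
  push_cast [hd'] at hre' him' hGH8 hGH4
  have hsq := sq_eq_sq_of_sixteen_eq_zero (A := (A : ZMod 16)) (C := C) (b := b) (n := n)
    rfl he8 he4 hGH8 hGH4 (mod_cast hcast hn) (by linear_combination hre')
    (by linear_combination him')
    (hAC.imp (fun ⟨w, hw⟩ => ⟨w, mod_cast hcast hw⟩) fun ⟨z, hz⟩ => ⟨z, mod_cast hcast hz⟩)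
  rw [hM]
  push_cast [hd']
  linear_combination hsq

theorem even_and_even_of_sq_sub_eq (hd : Odd d) {u v g : ℤ√d}
    (h : u ^ 2 - sqrtd * v ^ 2 = 2 * g ^ 2) : Even (u.re + u.im) ∧ Even (v.re + v.im) := by
  have hnorm : Even (u ^ 2 - sqrtd * v ^ 2).norm := by
    have h2 : Even (2 : ℤ√d).norm := ⟨2, by exact_mod_cast norm_natCast (d := d) 2⟩
    rw [h, Zsqrtd.norm_mul]
    exact h2.mul_right _
  have hv : Even (v.re + v.im) := by
    have him := congrArg im h
    simp only [sq, im_sub, im_mul, re_mul, re_sqrtd, im_sqrtd, re_ofNat, im_ofNat,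
      Nat.cast_ofNat] at him
    have hsq : Even (v.re ^ 2 + d * v.im ^ 2) :=
      ⟨u.re * u.im - 2 * (g.re * g.im), by linear_combination -him⟩
    simpa [Int.even_add, Int.even_mul, Int.even_pow, Int.not_even_iff_odd.2 hd] using hsq
  exact ⟨(Int.even_add.1 ((even_norm_sq_sub_iff hd u v).1 hnorm)).2 hv, hv⟩

theorem oddPartChar_norm_eq_of_sq_sub_eq (hd : d % 16 = 15) {u v g : ℤ√d}
    (h : u ^ 2 - sqrtd * v ^ 2 = 2 * g ^ 2) (hg : g.norm ≠ 0) :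
    oddPartChar v.norm = oddPartChar g.norm := by
  have hodd : Odd d := Int.odd_iff.2 (by lia)
  refine two_adic_descent (P := fun g => ∀ u v : ℤ√d, u ^ 2 - sqrtd * v ^ 2 = 2 * g ^ 2 →
      oddPartChar v.norm = oddPartChar g.norm) Zsqrtd.norm ?_ ?_ hg u v h
  · intro g hg u v h
    rw [← Int.not_even_iff_odd, even_norm_iff hodd, Int.not_even_iff_odd] at hg
    have hre := congrArg re h
    have him := congrArg im h
    simp only [sq, re_sub, re_mul, re_sqrtd, im_sub, im_mul, im_sqrtd, re_ofNat, im_ofNat,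
      Nat.cast_ofNat] at hre him
    obtain ⟨⟨hu, hu'⟩, -, hv⟩ := sq_sub_mul_sq_parity (d := d) (by lia) hg
      (a := u.re) (c := u.im) (b := v.re) (e := v.im)
      (by linear_combination hre) (by linear_combination him)
    obtain ⟨A, hA⟩ := even_iff_exists_two_mul.1 hu
    obtain ⟨C, hC⟩ := even_iff_exists_two_mul.1 hu'
    rw [hA, hC] at hre him
    simp only [norm_def, mul_assoc, ← sq]
    exact oddPartChar_sq_sub_mul_sq hd hg hv (A := A) (C := C) (by linarith)
      (by linear_combination him)
  · intro g hg
    obtain ⟨g', hg'⟩ := exists_two_mul_eq hodd ((even_norm_iff hodd g).1 hg)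
    refine ⟨g', -(d / 2), ?_, two_mul_norm_of_two_mul_eq (by lia) hg', fun ih u v h => ?_⟩
    · rw [Int.odd_iff]
      lia
    obtain ⟨hu, hv⟩ := even_and_even_of_sq_sub_eq hodd h
    obtain ⟨u', hu'⟩ := exists_two_mul_eq hodd hu
    obtain ⟨v', hv'⟩ := exists_two_mul_eq hodd hv
    rw [← oddPartChar_norm_of_two_mul_eq hd hv', ← oddPartChar_norm_of_two_mul_eq hd hg']
    refine ih u' v' (Zsqrtd.eq_of_smul_eq_smul_left (a := 4) (by norm_num) ?_)
    push_cast
    linear_combination (2 * u' + (1 + sqrtd) * u) * hu' - sqrtd * (2 * v' + (1 + sqrtd) * v) * hv'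
      - 2 * (2 * g' + (1 + sqrtd) * g) * hg' + (1 + sqrtd) ^ 2 * h

theorem two_mul_add_mul_eq_sq {f : ℤ√d} {n : ℤ} (h : f.norm = n ^ 2) :
    ((2 * (f.re + n) : ℤ) : ℤ√d) * f = (f + n) ^ 2 := by
  rw [norm_def] at h
  ext
  · simp [sq]
    linear_combination h
  · simp [sq]
    ring

theorem eq_zero_of_norm_eq_mul_sq {p : ℕ} [Fact p.Prime] {a : ℤ} (ha : legendreSym p a = -1)
    {f : ℤ√(p : ℤ)} {n : ℤ} (h : f.norm = a * n ^ 2) : n = 0 := by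
  have hp : Prime (p : ℤ) := Nat.prime_iff_prime_int.1 Fact.out
  induction hN : n.natAbs using Nat.strong_induction_on generalizing f n with
  | _ N ih =>
  subst hN
  by_contra hn
  rw [norm_def] at h
  obtain ⟨⟨x, hx⟩, n', rfl⟩ := legendreSym.prime_dvd_of_eq_neg_one ha (x := f.re) (y := n)
    ⟨f.im ^ 2, by linear_combination h⟩
  obtain ⟨y, hy⟩ : (p : ℤ) ∣ f.im := by
    refine hp.dvd_of_dvd_pow (n := 2) ⟨x ^ 2 - a * n' ^ 2, mul_left_cancel₀ hp.ne_zero ?_⟩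
    rw [hx] at h
    linear_combination -h
  have hn' : n' ≠ 0 := right_ne_zero_of_mul hn
  refine hn' (ih n'.natAbs ?_ (f := ⟨x, y⟩) ?_ rfl)
  · rw [Int.natAbs_mul]
    exact lt_mul_of_one_lt_left (Int.natAbs_pos.2 hn')
      (by simpa using (Fact.out : p.Prime).one_lt)
  · rw [norm_def]
    refine mul_left_cancel₀ (pow_ne_zero 2 hp.ne_zero) ?_
    rw [hx, hy] at h
    linear_combination h

theorem re_sq_sub_pos (hd : 0 < d) {u v : ℤ√d} (h : 0 < (u ^ 2 - sqrtd * v ^ 2).norm) :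
    0 < (u ^ 2 - sqrtd * v ^ 2).re := by
  obtain ⟨w, hw, hw2⟩ : ∃ w : ℝ, 0 < w ∧ w ^ 2 = d :=
    ⟨√d, Real.sqrt_pos.2 (mod_cast hd), Real.sq_sqrt (mod_cast hd.le)⟩
  have eval (r : ℝ) (hr : r ^ 2 = d) : ∃ φ : ℤ√d →+* ℝ, ∀ z, φ z = z.re + z.im * r :=
    ⟨lift ⟨r, by rw [← hr, sq]⟩, fun z => rfl⟩
  obtain ⟨φ, hφ⟩ := eval w hw2
  obtain ⟨ψ, hψ⟩ := eval (-w) (by rw [neg_sq, hw2])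
  have hψ0 : 0 ≤ ψ (u ^ 2 - sqrtd * v ^ 2) := by
    have hs : ψ sqrtd = -w := by simp [hψ]
    rw [map_sub, map_mul, map_pow, map_pow, hs]
    nlinarith [sq_nonneg (ψ u), sq_nonneg (ψ v)]
  generalize u ^ 2 - sqrtd * v ^ 2 = δ at *
  have hprod : φ δ * ψ δ = δ.norm := by
    rw [hφ, hψ, norm_def]
    push_cast
    rw [← hw2]
    ring
  have hpos : 0 < φ δ * ψ δ := by
    rw [hprod]
    exact_mod_cast h
  have hψpos : 0 < ψ δ := hψ0.lt_of_ne' (right_ne_zero_of_mul hpos.ne')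
  have hφpos := (pos_iff_pos_of_mul_pos hpos).2 hψpos
  rw [hφ] at hφpos
  rw [hψ] at hψpos
  have : (0 : ℝ) < δ.re := by linarith
  exact_mod_cast this

theorem isRadical_natCast {q : ℕ} (hq : q.Prime) (hq2 : q ≠ 2) (hqd : ¬ (q : ℤ) ∣ d) :
    IsRadical (q : ℤ√d) := by
  have hp := Nat.prime_iff_prime_int.1 hq
  have hq2' : ¬ (q : ℤ) ∣ 2 := fun h => hq2 ((Nat.prime_dvd_prime_iff_eq hq Nat.prime_two).1
    (by exact_mod_cast h))
  refine (isRadical_iff_pow_one_lt 2 one_lt_two).2 fun z hz => ?_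
  rw [← Int.cast_natCast, intCast_dvd] at hz ⊢
  simp only [sq, re_mul, im_mul] at hz
  obtain ⟨hre, him⟩ := hz
  have hor : (q : ℤ) ∣ z.re ∨ (q : ℤ) ∣ z.im := by
    have : (q : ℤ) ∣ 2 * (z.re * z.im) := by
      convert him using 1
      ring
    exact hp.dvd_or_dvd ((hp.dvd_or_dvd this).resolve_left hq2')
  rcases hor with h | h
  · refine ⟨h, ?_⟩
    have h' : (q : ℤ) ∣ d * (z.im * z.im) := by
      rw [mul_assoc] at hre
      exact (Int.dvd_add_right (h.mul_right _)).1 hre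
    exact or_self_iff.1 (hp.dvd_or_dvd ((hp.dvd_or_dvd h').resolve_left hqd))
  · exact ⟨or_self_iff.1 (hp.dvd_or_dvd ((Int.dvd_add_left (h.mul_left _)).1 hre)), h⟩

end QuadraticOrder

/-! ### Virtual units -/

section VirtualUnits

open FractionalIdeal

theorem eq_of_sq_eq_one_of_quotient_range {A B : Type*} [CommGroup A] [CommGroup B] {f : A →* B}
    (hB : ∀ b : B, b ^ 2 = 1 → b = 1)
    (h : (f.ker ⊔ Subgroup.square A).relIndex ((Subgroup.square B).comap f) ∣ 2)
    {a b : B ⧸ f.range} (ha : a ^ 2 = 1) (hb : b ^ 2 = 1) (ha1 : a ≠ 1) (hb1 : b ≠ 1) : a = b := by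
  have exists_eq {b : B} (hb : (b : B ⧸ f.range) ^ 2 = 1) : ∃ x, f x = b * b := by
    rwa [← QuotientGroup.mk_pow, QuotientGroup.eq_one_iff, sq] at hb
  have eq_one {b : B} {x : A} (hx : f x = b * b) (hmem : x ∈ f.ker ⊔ Subgroup.square A) :
      (b : B ⧸ f.range) = 1 := by
    obtain ⟨u, hu, _, ⟨y, rfl⟩, rfl⟩ := Subgroup.mem_sup.1 hmem
    rw [map_mul, MonoidHom.mem_ker.1 hu, one_mul, map_mul, ← sq, ← sq, ← div_eq_one,
      ← div_pow] at hx
    exact (QuotientGroup.eq_one_iff b).2 ⟨y, div_eq_one.1 (hB _ hx)⟩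
  induction a using QuotientGroup.induction_on with | H a =>
  induction b using QuotientGroup.induction_on with | H b =>
  obtain ⟨x, hx⟩ := exists_eq ha
  obtain ⟨y, hy⟩ := exists_eq hb
  have hxy := mul_mem_of_relIndex_dvd_two h ⟨a, hx⟩ ⟨b, hy⟩ (mt (eq_one hx) ha1)
    (mt (eq_one hy) hb1)
  have hab := eq_one (b := a * b) (by rw [map_mul, hx, hy, mul_mul_mul_comm]) hxy
  rw [QuotientGroup.mk_mul] at hab
  rw [eq_inv_of_mul_eq_one_left hab, inv_eq_of_mul_eq_one_left (sq (b : B ⧸ f.range) ▸ hb)]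

variable {R K : Type*} [CommRing R] [Field K] [Algebra R K] [IsFractionRing R K]

variable (R) in
/-- An element of the fraction field `K` of `R` is a *virtual unit* (or *singular*) if the
fractional ideal it generates is a square. -/
def IsVirtualUnit (x : K) : Prop :=
  IsSquare (spanSingleton R⁰ x)

theorem IsVirtualUnit.mul {x y : K} (hx : IsVirtualUnit R x) (hy : IsVirtualUnit R y) :
    IsVirtualUnit R (x * y) := by
  rw [IsVirtualUnit, ← spanSingleton_mul_spanSingleton]
  exact IsSquare.mul hx hy

theorem isVirtualUnit_sq (x : K) : IsVirtualUnit R (x ^ 2) := by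
  rw [IsVirtualUnit, ← spanSingleton_pow]
  exact IsSquare.sq _

theorem isVirtualUnit_mul_sq_iff {x y : K} (hy : y ≠ 0) :
    IsVirtualUnit R (x * y ^ 2) ↔ IsVirtualUnit R x := by
  refine ⟨fun h => ?_, fun h => h.mul (isVirtualUnit_sq y)⟩
  have := h.mul (isVirtualUnit_sq (R := R) y⁻¹)
  rwa [inv_pow, mul_inv_cancel_right₀ (pow_ne_zero 2 hy)] at this

theorem isVirtualUnit_neg_iff {x : K} : IsVirtualUnit R (-x) ↔ IsVirtualUnit R x := by
  have hspan : spanSingleton R⁰ (-x) = spanSingleton R⁰ x := coeToSubmodule_inj.1 <| by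
    rw [coe_spanSingleton, coe_spanSingleton, ← Set.neg_singleton, Submodule.span_neg]
  rw [IsVirtualUnit, hspan, IsVirtualUnit]

theorem le_one_of_mul_self_le_one [IsDomain R] [IsIntegrallyClosed R] {J : FractionalIdeal R⁰ K}
    (h : J * J ≤ 1) : J ≤ 1 := by
  intro x hx
  obtain ⟨y, hy⟩ := (mem_one_iff R⁰).1 (h (mul_mem_mul hx hx))
  have hint : IsIntegral R x := IsIntegral.of_pow two_pos (sq x ▸ hy ▸ isIntegral_algebraMap)
  exact (mem_one_iff R⁰).2 (IsIntegrallyClosed.isIntegral_iff.1 hint)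

theorem isVirtualUnit_algebraMap_iff [IsDomain R] [IsIntegrallyClosed R] {x : R} :
    IsVirtualUnit R (algebraMap R K x) ↔ IsSquare (Ideal.span {x}) := by
  rw [IsVirtualUnit, ← coeIdeal_span_singleton]
  refine ⟨fun ⟨J, hJ⟩ => ?_, fun ⟨I, hI⟩ => ⟨I, by rw [hI, coeIdeal_mul]⟩⟩
  obtain ⟨I, rfl⟩ := le_one_iff_exists_coeIdeal.1
    (le_one_of_mul_self_le_one (hJ ▸ coeIdeal_le_one))
  exact ⟨I, coeIdeal_injective (K := K) (hJ.trans (coeIdeal_mul I I).symm)⟩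

theorem eq_one_of_sq_eq_one [IsDomain R] [IsIntegrallyClosed R] {J : (FractionalIdeal R⁰ K)ˣ}
    (h : J ^ 2 = 1) : J = 1 := by
  have le_one {J : (FractionalIdeal R⁰ K)ˣ} (h : J ^ 2 = 1) : (J : FractionalIdeal R⁰ K) ≤ 1 :=
    le_one_of_mul_self_le_one (by rw [← Units.val_mul, ← sq, h, Units.val_one])
  refine Units.ext (le_antisymm (le_one h) ?_)
  have hinv := le_one (J := J⁻¹) (by rw [inv_pow, h, inv_one])
  calc 1 = (J : FractionalIdeal R⁰ K) * (J⁻¹ : (FractionalIdeal R⁰ K)ˣ) := by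
        rw [← Units.val_mul, mul_inv_cancel, Units.val_one]
    _ ≤ J * 1 := by gcongr
    _ = J := mul_one _

variable (R K) in
/-- The group of nonzero virtual units; modulo squares it is the `2`-Selmer group of `K`. -/
def virtualUnits : Subgroup Kˣ :=
  (Subgroup.square _).comap (toPrincipalIdeal R K)

@[simp]
theorem mem_virtualUnits {x : Kˣ} : x ∈ virtualUnits R K ↔ IsVirtualUnit R (x : K) := by
  rw [virtualUnits, Subgroup.mem_comap, Subgroup.mem_square, IsVirtualUnit, ← coe_toPrincipalIdeal]
  refine ⟨fun ⟨I, hI⟩ => ⟨I, by rw [hI, Units.val_mul]⟩, fun ⟨J, hJ⟩ => ?_⟩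
  obtain ⟨I, rfl⟩ := isUnit_of_mul_isUnit_left (hJ ▸ Units.isUnit _)
  exact ⟨I, Units.ext hJ⟩

theorem range_unitsMap_le_ker_toPrincipalIdeal :
    (Units.map (algebraMap R K : R →* K)).range ≤ (toPrincipalIdeal R K).ker := by
  rintro _ ⟨u, rfl⟩
  rw [MonoidHom.mem_ker, toPrincipalIdeal_eq_iff]
  simp [← coeIdeal_span_singleton, Ideal.span_singleton_eq_top.2 u.isUnit]

theorem ker_toPrincipalIdeal_sup_square_le_virtualUnits :
    (toPrincipalIdeal R K).ker ⊔ Subgroup.square Kˣ ≤ virtualUnits R K :=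
  sup_le ((toPrincipalIdeal R K).ker_le_comap _) fun _ hx => hx.map _

theorem card_powMonoidHom_two_ker_classGroup_le [IsDomain R] [IsIntegrallyClosed R]
    (h : ((toPrincipalIdeal R K).ker ⊔ Subgroup.square Kˣ).relIndex (virtualUnits R K) ∣ 2) :
    Nat.card (powMonoidHom 2 : ClassGroup R →* ClassGroup R).ker ≤ 2 := by
  refine card_powMonoidHom_two_ker_le fun a b ha hb ha1 hb1 => (ClassGroup.equiv K).injective ?_
  refine eq_of_sq_eq_one_of_quotient_range (fun J => eq_one_of_sq_eq_one) h ?_ ?_ ?_ ?_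
  · rw [← map_pow, ha, map_one]
  · rw [← map_pow, hb, map_one]
  · rwa [Ne, EmbeddingLike.map_eq_one_iff]
  · rwa [Ne, EmbeddingLike.map_eq_one_iff]

end VirtualUnits

/-! ### Pure quartic fields -/

/-- A presentation of `K` as the pure quartic field `ℚ(⁴√p)`: the power basis of a root of
`X ^ 4 - p`, and the automorphism `⁴√p ↦ -⁴√p`, whose fixed field is `ℚ(√p)`. -/
structure Presentation (p : ℕ) (K : Type*) [Field K] [CharZero K] where
  root : K
  root_pow : root ^ 4 = p
  basis : Module.Basis (Fin 4) ℚ K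
  basis_apply (i : Fin 4) : basis i = root ^ (i : ℕ)
  conj : K ≃ₐ[ℚ] K
  conj_root : conj root = -root

namespace Presentation

variable {p : ℕ} {K : Type*} [Field K] [CharZero K] (S : Presentation p K)

/-- The embedding of `ℤ[√p]` in `K`. -/
def ofZsqrtd : ℤ√(p : ℤ) →+* K :=
  Zsqrtd.lift ⟨S.root ^ 2, by rw [← pow_add, S.root_pow, Int.cast_natCast]⟩

theorem ofZsqrtd_apply (u : ℤ√(p : ℤ)) : S.ofZsqrtd u = u.re + u.im * S.root ^ 2 := rfl

theorem ofZsqrtd_sqrtd : S.ofZsqrtd sqrtd = S.root ^ 2 := by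
  simp [ofZsqrtd_apply]

/-- The element `u + v ⁴√p` of the order `ℤ[⁴√p]`, for `u` and `v` in `ℤ[√p]`. -/
def elt (u v : ℤ√(p : ℤ)) : K := S.ofZsqrtd u + S.ofZsqrtd v * S.root

theorem elt_zero_right (u : ℤ√(p : ℤ)) : S.elt u 0 = S.ofZsqrtd u := by
  rw [elt, map_zero, zero_mul, add_zero]

theorem elt_add (u v u' v' : ℤ√(p : ℤ)) : S.elt u v + S.elt u' v' = S.elt (u + u') (v + v') := by
  simp only [elt, map_add]
  ring

theorem ofZsqrtd_mul_elt (w u v : ℤ√(p : ℤ)) :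
    S.ofZsqrtd w * S.elt u v = S.elt (w * u) (w * v) := by
  simp only [elt, map_mul]
  ring

theorem elt_mul (u v u' v' : ℤ√(p : ℤ)) :
    S.elt u v * S.elt u' v' = S.elt (u * u' + sqrtd * v * v') (u * v' + v * u') := by
  simp only [elt, map_add, map_mul, ofZsqrtd_sqrtd]
  ring

theorem basis_repr_elt (u v : ℤ√(p : ℤ)) (i : Fin 4) :
    S.basis.repr (S.elt u v) i = (![u.re, v.re, u.im, v.im] i : ℚ) := by
  have h : S.elt u v = S.basis.equivFun.symm ![(u.re : ℚ), v.re, u.im, v.im] := by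
    simp [Module.Basis.equivFun_symm_apply, Fin.sum_univ_four, S.basis_apply, elt, ofZsqrtd_apply,
      Algebra.smul_def]
    ring
  rw [← Module.Basis.equivFun_apply, h, LinearEquiv.apply_symm_apply]
  fin_cases i <;> rfl

theorem elt_inj {u v u' v' : ℤ√(p : ℤ)} : S.elt u v = S.elt u' v' ↔ u = u' ∧ v = v' := by
  refine ⟨fun h => ?_, fun ⟨hu, hv⟩ => by rw [hu, hv]⟩
  have hcoord (i : Fin 4) : (![u.re, v.re, u.im, v.im] i : ℚ) =
      ![u'.re, v'.re, u'.im, v'.im] i := by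
    rw [← S.basis_repr_elt, h, S.basis_repr_elt]
  have h0 := hcoord 0
  have h1 := hcoord 1
  have h2 := hcoord 2
  have h3 := hcoord 3
  simp only [Matrix.cons_val, Int.cast_inj] at h0 h1 h2 h3
  exact ⟨Zsqrtd.ext h0 h2, Zsqrtd.ext h1 h3⟩

theorem intCast_mul_eq_of_intCast_mul_eq_elt {x : K} {m n : ℤ} {u v u' v' : ℤ√(p : ℤ)}
    (h : m * x = S.elt u v) (h' : n * x = S.elt u' v') : n * u = m * u' ∧ n * v = m * v' := by
  refine S.elt_inj.1 ?_
  rw [← ofZsqrtd_mul_elt, ← ofZsqrtd_mul_elt, ← h, ← h', map_intCast, map_intCast]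
  ring

theorem ofZsqrtd_injective : Function.Injective S.ofZsqrtd := fun u v h =>
  (S.elt_inj.1 (by rwa [elt_zero_right, elt_zero_right] : S.elt u 0 = S.elt v 0)).1

theorem conj_ofZsqrtd (u : ℤ√(p : ℤ)) : S.conj (S.ofZsqrtd u) = S.ofZsqrtd u := by
  simp [ofZsqrtd_apply, S.conj_root]

theorem conj_elt (u v : ℤ√(p : ℤ)) : S.conj (S.elt u v) = S.elt u (-v) := by
  simp [elt, conj_ofZsqrtd, S.conj_root]

theorem conj_elt_eq_self_iff {u v : ℤ√(p : ℤ)} : S.conj (S.elt u v) = S.elt u v ↔ v = 0 := by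
  refine ⟨fun h => S.ofZsqrtd_injective ?_, fun h => by rw [conj_elt, h, neg_zero]⟩
  rw [conj_elt, elt_inj] at h
  rw [map_zero, ← neg_eq_self, ← map_neg, h.2]

theorem elt_mul_conj_elt (u v : ℤ√(p : ℤ)) :
    S.elt u v * S.conj (S.elt u v) = S.ofZsqrtd (u ^ 2 - sqrtd * v ^ 2) := by
  rw [conj_elt, elt_mul, ← elt_zero_right, elt_inj]
  constructor <;> ring

theorem exists_intCast_mul_eq_elt (x : K) :
    ∃ D : ℤ, D ≠ 0 ∧ ∃ u v : ℤ√(p : ℤ), D * x = S.elt u v := by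
  obtain ⟨⟨D, hD⟩, hint⟩ := IsLocalization.exist_integer_multiples_of_finset
    (nonZeroDivisors ℤ) (Finset.univ.image (S.basis.repr x))
  have hcoord (i : Fin 4) : ∃ n : ℤ, n = D * S.basis.repr x i := by
    simpa [IsLocalization.IsInteger] using hint _ (Finset.mem_image_of_mem _ (Finset.mem_univ i))
  choose n hn using hcoord
  refine ⟨D, nonZeroDivisors.ne_zero hD, ⟨n 0, n 2⟩, ⟨n 1, n 3⟩, ?_⟩
  have hx : (D : K) * x = (D : ℚ) • x := by simp [Algebra.smul_def]
  refine S.basis.ext_elem fun i => ?_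
  rw [basis_repr_elt, hx, map_smul, Finsupp.smul_apply, smul_eq_mul, ← hn]
  fin_cases i <;> rfl

theorem conj_conj (x : K) : S.conj (S.conj x) = x := by
  obtain ⟨D, hD, u, v, h⟩ := S.exists_intCast_mul_eq_elt x
  refine mul_left_cancel₀ (Int.cast_ne_zero.2 hD : (D : K) ≠ 0) ?_
  have hD : S.conj D = D := map_intCast S.conj D
  conv_lhs => rw [← hD, ← hD]
  rw [← map_mul, ← map_mul, h, conj_elt, conj_elt, neg_neg]

theorem exists_intCast_mul_eq_ofZsqrtd {x : K} (hx : S.conj x = x) :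
    ∃ D : ℤ, D ≠ 0 ∧ ∃ u : ℤ√(p : ℤ), D * x = S.ofZsqrtd u := by
  obtain ⟨D, hD, u, v, h⟩ := S.exists_intCast_mul_eq_elt x
  obtain rfl : v = 0 := S.conj_elt_eq_self_iff.1 (by rw [← h, map_mul, hx, map_intCast])
  exact ⟨D, hD, u, by rw [h, elt_zero_right]⟩

theorem leftMulMatrix_elt (u v : ℤ√(p : ℤ)) : Algebra.leftMulMatrix S.basis (S.elt u v) =
    !![(u.re : ℚ), p * v.im, p * u.im, p * v.re;
       v.re, u.re, p * v.im, p * u.im;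
       u.im, v.re, u.re, p * v.im;
       v.im, u.im, v.re, u.re] := by
  have hbasis : ⇑S.basis = ![S.elt 1 0, S.elt 0 1, S.elt sqrtd 0, S.elt 0 sqrtd] := by
    ext i
    fin_cases i <;> simp [S.basis_apply, elt, ofZsqrtd_sqrtd, pow_succ]
  ext i j
  rw [Algebra.leftMulMatrix_eq_repr_mul, hbasis]
  fin_cases j <;> simp only [Fin.zero_eta, Fin.mk_one, Fin.reduceFinMk, Matrix.cons_val, elt_mul,
    basis_repr_elt] <;> fin_cases i <;> simp

theorem norm_elt (u v : ℤ√(p : ℤ)) :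
    Algebra.norm ℚ (S.elt u v) = ((u ^ 2 - sqrtd * v ^ 2).norm : ℤ) := by
  rw [Algebra.norm_eq_matrix_det S.basis, leftMulMatrix_elt, norm_sq_sub]
  simp [Matrix.det_succ_row_zero, Fin.sum_univ_succ, Fin.succAbove]
  ring

theorem trace_elt (u v : ℤ√(p : ℤ)) : Algebra.trace ℚ K (S.elt u v) = 4 * u.re := by
  rw [Algebra.trace_eq_matrix_trace S.basis, leftMulMatrix_elt]
  simp [Matrix.trace, Fin.sum_univ_four]
  ring

theorem norm_ofZsqrtd (u : ℤ√(p : ℤ)) : Algebra.norm ℚ (S.ofZsqrtd u) = (u.norm : ℚ) ^ 2 := by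
  rw [← elt_zero_right, norm_elt]
  simp [sq]

include S in
theorem norm_ne_zero {u : ℤ√(p : ℤ)} (hu : u ≠ 0) : u.norm ≠ 0 := fun h => by
  have hnorm := S.norm_ofZsqrtd u
  rw [h, Int.cast_zero, zero_pow two_ne_zero, Algebra.norm_eq_zero_iff_of_basis S.basis] at hnorm
  exact hu (S.ofZsqrtd_injective (by rw [hnorm, map_zero]))

theorem isIntegral_root : IsIntegral ℤ S.root := by
  refine IsIntegral.of_pow (n := 4) four_pos ?_
  rw [S.root_pow]
  exact isIntegral_natCast p

theorem isIntegral_ofZsqrtd (u : ℤ√(p : ℤ)) : IsIntegral ℤ (S.ofZsqrtd u) :=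
  (isIntegral_intCast _).add ((isIntegral_intCast _).mul (S.isIntegral_root.pow 2))

theorem isIntegral_elt (u v : ℤ√(p : ℤ)) : IsIntegral ℤ (S.elt u v) :=
  (S.isIntegral_ofZsqrtd u).add ((S.isIntegral_ofZsqrtd v).mul S.isIntegral_root)

theorem exists_eq_elt_of_isIntegral {x : K} (hx : IsIntegral ℤ x) :
    ∃ u v : ℤ√(p : ℤ), 4 * p * x = S.elt u v := by
  obtain ⟨D, hD, u, v, h⟩ := S.exists_intCast_mul_eq_elt x
  have := Module.Basis.finiteDimensional_of_finite S.basis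
  have htrace (u' v' : ℤ√(p : ℤ)) :
      ∃ n : ℤ, D * n = 4 * (u * u' + sqrtd * v * v').re := by
    obtain ⟨n, hn⟩ := IsIntegrallyClosed.isIntegral_iff.1
      (Algebra.isIntegral_trace (L := ℚ) (hx.mul (S.isIntegral_elt u' v')))
    have hDx : (D : K) * x * S.elt u' v' = (D : ℚ) • (x * S.elt u' v') := by
      rw [Algebra.smul_def, map_intCast, mul_assoc]
    have := S.trace_elt (u * u' + sqrtd * v * v') (u * v' + v * u')
    rw [← elt_mul, ← h, hDx, map_smul, smul_eq_mul, ← hn, eq_intCast] at this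
    exact ⟨n, by exact_mod_cast this⟩
  obtain ⟨a, ha⟩ := htrace 1 0
  obtain ⟨b, hb⟩ := htrace 0 sqrtd
  obtain ⟨c, hc⟩ := htrace sqrtd 0
  obtain ⟨e, he⟩ := htrace 0 1
  refine ⟨⟨p * a, c⟩, ⟨b, e⟩, mul_left_cancel₀ (Int.cast_ne_zero.2 hD : (D : K) ≠ 0) ?_⟩
  have hcast : (D : K) = S.elt D 0 ∧ (4 * p : K) = S.elt (4 * p) 0 := by
    simp only [elt_zero_right, map_mul, map_intCast, map_ofNat, map_natCast, and_self]
  rw [mul_left_comm, h, hcast.1, hcast.2, elt_mul, elt_mul, elt_inj]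
  simp only [mul_zero, zero_mul, add_zero, Zsqrtd.ext_iff]
  simp at ha hb hc he ⊢
  grind

end Presentation

theorem sup_span_mul_sup_span_eq {R : Type*} [CommRing R] {A : Ideal R} {x y : R}
    (hxy : IsCoprime x y) (hA : x * y ∈ A) :
    (A ⊔ Ideal.span {x}) * (A ⊔ Ideal.span {y}) = A := by
  have hcop : (A ⊔ Ideal.span {x}) ⊔ (A ⊔ Ideal.span {y}) = ⊤ := by
    rw [← sup_sup_distrib_left, Ideal.isCoprime_iff_sup_eq.1
      ((Ideal.isCoprime_span_singleton_iff x y).2 hxy), sup_top_eq]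
  refine le_antisymm ?_ ((le_inf le_sup_left le_sup_left).trans
    (Ideal.mul_eq_inf_of_coprime hcop).ge)
  rw [Ideal.mul_sup, Ideal.sup_mul, Ideal.sup_mul, Ideal.span_singleton_mul_span_singleton]
  exact sup_le (sup_le Ideal.mul_le_left Ideal.mul_le_right)
    (sup_le Ideal.mul_le_left ((Ideal.span_singleton_le_iff_mem _).2 hA))

theorem exists_eq_mul_coprime_dvd_pow {n : ℕ} (hn : n ≠ 0) (c : ℕ) :
    ∃ m M k : ℕ, n = m * M ∧ m.Coprime c ∧ M ∣ c ^ k := by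
  induction n using Nat.strong_induction_on with
  | _ n ih =>
    by_cases h : n.Coprime c
    · exact ⟨n, 1, 0, (mul_one n).symm, h, one_dvd _⟩
    · have hpos : 0 < n.gcd c := Nat.gcd_pos_of_pos_left c (Nat.pos_of_ne_zero hn)
      have hmul : n / n.gcd c * n.gcd c = n := Nat.div_mul_cancel (n.gcd_dvd_left c)
      obtain ⟨m, M, k, h1, h2, h3⟩ := ih (n / n.gcd c)
        (Nat.div_lt_self (Nat.pos_of_ne_zero hn) (lt_of_le_of_ne hpos (Ne.symm h)))
        (left_ne_zero_of_mul (hmul ▸ hn))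
      exact ⟨m, M * n.gcd c, k + 1, by rw [← mul_assoc, ← h1, hmul], h2,
        pow_succ c k ▸ mul_dvd_mul h3 (n.gcd_dvd_right c)⟩

theorem isUnit_natCast_quotient {R : Type*} [CommRing R] {A : Ideal R} {m n : ℕ}
    (hm : (m : R) ∈ A) (hmn : m.Coprime n) : IsUnit (n : R ⧸ A) := by
  have hm0 : (m : R ⧸ A) = 0 := by
    rw [← map_natCast (Ideal.Quotient.mk A), Ideal.Quotient.eq_zero_iff_mem.2 hm]
  obtain ⟨x, y, hxy⟩ := hmn.cast (R := R ⧸ A)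
  exact IsUnit.of_mul_eq_one_right y (by rwa [hm0, mul_zero, zero_add] at hxy)

theorem natCast_dvd_natCast {K : Type*} [Field K] [NumberField K] {m n : ℕ} :
    (m : 𝓞 K) ∣ n ↔ m ∣ n := by
  refine ⟨fun h => ?_, fun h => Nat.cast_dvd_cast h⟩
  have := Ideal.absNorm_dvd_absNorm_of_le (Ideal.span_singleton_le_span_singleton.2 h)
  rwa [Ideal.absNorm_span_natCast, Ideal.absNorm_span_natCast,
    Nat.pow_dvd_pow_iff Module.finrank_pos.ne'] at this

theorem exists_norm_sq_eq_of_isVirtualUnit {K : Type*} [Field K] [NumberField K] {x : 𝓞 K}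
    (hx : IsVirtualUnit (𝓞 K) (algebraMap (𝓞 K) K x)) :
    ∃ n : ℕ, |Algebra.norm ℚ (algebraMap (𝓞 K) K x)| = n ^ 2 := by
  obtain ⟨I, hI⟩ := isVirtualUnit_algebraMap_iff.1 hx
  refine ⟨Ideal.absNorm I, ?_⟩
  rw [← Algebra.coe_norm_int, ← Int.cast_abs, Int.abs_eq_natAbs, ← Ideal.absNorm_span_singleton, hI,
    map_mul, sq]
  push_cast
  rfl

theorem dvd_of_squarefree_of_isSquare_span {K : Type*} [Field K] [NumberField K] {a c : ℕ}
    (hc : c ≠ 0) (hrad : ∀ q : ℕ, q.Prime → ¬ q ∣ c → IsRadical (q : 𝓞 K)) (ha : Squarefree a)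
    (hsq : IsSquare (Ideal.span {(a : 𝓞 K)})) : a ∣ c := by
  obtain ⟨A, hA⟩ := hsq
  have hsub : a.primeFactors ⊆ c.primeFactors := fun q hq => by
    have hqp := Nat.prime_of_mem_primeFactors hq
    refine Nat.mem_primeFactors.2 ⟨hqp, ?_, hc⟩
    by_contra hqc
    have hle : A ≤ Ideal.span {(q : 𝓞 K)} := fun y hy => by
      refine Ideal.mem_span_singleton.2 (hrad q hqp hqc 2 y ?_)
      refine (Nat.cast_dvd_cast (Nat.dvd_of_mem_primeFactors hq)).trans ?_
      rw [← Ideal.mem_span_singleton, hA, sq]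
      exact Ideal.mul_mem_mul hy hy
    have hqq := Ideal.mul_mono hle hle
    rw [← hA, Ideal.span_singleton_mul_span_singleton, Ideal.span_singleton_le_span_singleton,
      ← Nat.cast_mul, natCast_dvd_natCast] at hqq
    exact hqp.not_isUnit (ha q hqq)
  rw [← Nat.prod_primeFactors_of_squarefree ha]
  exact (Finset.prod_dvd_prod_of_subset _ _ _ hsub).trans (Nat.prod_primeFactors_dvd c)

theorem absNorm_eq_mul_sq_of_map_eq {K : Type*} [Field K] [NumberField K] {τ : 𝓞 K →+* 𝓞 K}
    (hτ : Function.Involutive τ) {t : 𝓞 K} (hτt : τ t = -t) {c : ℕ} (hc2 : 2 ∣ c) (htc : t ∣ c)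
    {A : Ideal (𝓞 K)} (hA0 : A ≠ ⊥) (hA : A.map τ = A) :
    ∃ r k : ℕ, r ∣ c ∧ Ideal.absNorm A = r * k ^ 2 := by
  obtain ⟨m, M, k, hmM, hmc, hMc⟩ :=
    exists_eq_mul_coprime_dvd_pow (mt Ideal.absNorm_eq_zero_iff.1 hA0) c
  have hsplit := sup_span_mul_sup_span_eq (A := A)
    (((hmc.pow_right k).of_dvd_right hMc).cast (R := 𝓞 K))
    (by rw [← Nat.cast_mul, ← hmM]; exact Ideal.absNorm_mem A)
  set A' := A ⊔ Ideal.span {(m : 𝓞 K)} with hA'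
  set B := A ⊔ Ideal.span {(M : 𝓞 K)}
  have hmA' : (m : 𝓞 K) ∈ A' := Ideal.mem_sup_right (Ideal.mem_span_singleton_self _)
  obtain ⟨k', hk'⟩ : IsSquare (Ideal.absNorm A') := by
    have hle : A' ≤ A'.comap τ := by
      rw [← Ideal.map_le_iff_le_comap, hA', Ideal.map_sup, hA, Ideal.map_span, Set.image_singleton,
        map_natCast]
    have hinv : Function.Involutive (Ideal.quotientMap A' τ hle) := fun x => by
      obtain ⟨x, rfl⟩ := Ideal.Quotient.mk_surjective x
      rw [Ideal.quotientMap_mk, Ideal.quotientMap_mk, hτ]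
    rw [Ideal.absNorm_apply, Submodule.cardQuot_apply]
    refine isSquare_card_of_involutive (t := Ideal.Quotient.mk A' t) hinv ?_ ?_ ?_
    · refine isUnit_of_dvd_unit (map_dvd _ htc) ?_
      rw [map_natCast]
      exact isUnit_natCast_quotient hmA' hmc
    · rw [Ideal.quotientMap_mk, hτt, map_neg]
    · exact_mod_cast isUnit_natCast_quotient hmA' (hmc.of_dvd_right hc2)
  obtain ⟨r, l, hrl, hr⟩ := Nat.sq_mul_squarefree (Ideal.absNorm B)
  refine ⟨r, l * k', hr.isRadical (k * Module.finrank ℤ (𝓞 K)) c ?_, ?_⟩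
  · calc r ∣ Ideal.absNorm B := ⟨l ^ 2, by rw [← hrl, mul_comm]⟩
      _ ∣ Ideal.absNorm (Ideal.span {(M : 𝓞 K)}) := Ideal.absNorm_dvd_absNorm_of_le le_sup_right
      _ ∣ c ^ (k * Module.finrank ℤ (𝓞 K)) := by
        rw [Ideal.absNorm_span_natCast, pow_mul]
        exact pow_dvd_pow_of_dvd hMc _
  · rw [← hsplit, map_mul, ← hrl, hk']
    ring

namespace Presentation

variable {p : ℕ} {K : Type*} [Field K] [NumberField K] (S : Presentation p K)

/-- The element `u + v ⁴√p` of `ℤ[⁴√p]`, as an algebraic integer. -/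
def eltInt (u v : ℤ√(p : ℤ)) : 𝓞 K := ⟨S.elt u v, S.isIntegral_elt u v⟩

@[simp]
theorem algebraMap_eltInt (u v : ℤ√(p : ℤ)) : algebraMap (𝓞 K) K (S.eltInt u v) = S.elt u v := rfl

/-- The restriction of the automorphism `⁴√p ↦ -⁴√p` to the ring of integers. -/
def conjInt : 𝓞 K →+* 𝓞 K := RingOfIntegers.mapRingHom S.conj

@[simp]
theorem algebraMap_conjInt (x : 𝓞 K) : algebraMap (𝓞 K) K (S.conjInt x) = S.conj x := rfl

theorem conjInt_involutive : Function.Involutive S.conjInt := fun x =>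
  RingOfIntegers.coe_injective (S.conj_conj x)

theorem isVirtualUnit_conj {x : K} (hx : IsVirtualUnit (𝓞 K) x) :
    IsVirtualUnit (𝓞 K) (S.conj x) := by
  obtain ⟨y, D, hD, rfl⟩ := IsFractionRing.div_surjective (A := 𝓞 K) x
  have hD0 : (D : K) ≠ 0 := RingOfIntegers.coe_ne_zero_iff.2 (nonZeroDivisors.ne_zero hD)
  have hD0' : S.conj D ≠ 0 := (map_ne_zero S.conj).2 hD0
  have hyD : IsVirtualUnit (𝓞 K) ((y * D : 𝓞 K) : K) := by
    rw [← isVirtualUnit_mul_sq_iff hD0] at hx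
    convert hx using 1
    push_cast
    field_simp
  obtain ⟨I, hI⟩ := isVirtualUnit_algebraMap_iff.1 hyD
  have h : IsVirtualUnit (𝓞 K) ((S.conjInt (y * D) : 𝓞 K) : K) := by
    refine isVirtualUnit_algebraMap_iff.2 ⟨I.map S.conjInt, ?_⟩
    rw [← Ideal.map_mul, ← hI, Ideal.map_span, Set.image_singleton]
  rw [← isVirtualUnit_mul_sq_iff hD0']
  convert h using 1
  simp only [algebraMap_conjInt, map_mul, map_div₀]
  field_simp

include S in
theorem isRadical_natCast_of_not_dvd {q : ℕ} (hq : q.Prime) (hqp : ¬ q ∣ 2 * p) :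
    IsRadical (q : 𝓞 K) := by
  rw [isRadical_iff_pow_one_lt 2 one_lt_two]
  rintro x ⟨y, hxy⟩
  obtain ⟨u, v, hx⟩ := S.exists_eq_elt_of_isIntegral x.isIntegral_coe
  obtain ⟨u', v', hy⟩ := S.exists_eq_elt_of_isIntegral y.isIntegral_coe
  have hsq : S.elt u v * S.elt u v = S.elt (q * (4 * p)) 0 * S.elt u' v' := by
    have hxy' : (x : K) ^ 2 = q * y := by exact_mod_cast congrArg (algebraMap (𝓞 K) K) hxy
    rw [← hx, ← hy, elt_zero_right]
    simp only [map_mul, map_natCast, map_ofNat]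
    linear_combination 16 * p ^ 2 * hxy'
  simp only [elt_mul, elt_inj, mul_zero, zero_mul, add_zero] at hsq
  obtain ⟨hre, him⟩ := hsq
  have hrad : IsRadical (q : ℤ√(p : ℤ)) := isRadical_natCast hq
    (by rintro rfl; exact hqp (dvd_mul_right 2 p))
    (by rw [Int.natCast_dvd_natCast]; exact fun h => hqp (h.mul_left 2))
  obtain ⟨a, ha⟩ : (q : ℤ√(p : ℤ)) ∣ 2 * u := by
    refine hrad 3 _ (Dvd.intro (16 * (p : ℤ√(p : ℤ)) * (2 * u * u' - sqrtd * v * v')) ?_)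
    linear_combination -8 * u * hre + 4 * sqrtd * v * him
  obtain ⟨b, hb⟩ : (q : ℤ√(p : ℤ)) ∣ 2 * sqrtd * v := by
    refine hrad 2 _ (Dvd.intro (sqrtd * (16 * (p : ℤ√(p : ℤ)) * u' - a * (2 * u))) ?_)
    linear_combination -4 * sqrtd * hre + sqrtd * 2 * u * ha
  have hdvd : (q : 𝓞 K) ∣ ((8 * p ^ 2 : ℕ) : 𝓞 K) * x := by
    refine ⟨S.eltInt (p * a) (sqrtd * b), RingOfIntegers.coe_injective ?_⟩
    have h : S.elt (2 * p) 0 * S.elt u v = S.elt q 0 * S.elt (p * a) (sqrtd * b) := by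
      simp only [elt_mul, elt_inj, mul_zero, zero_mul, add_zero]
      have hs : (sqrtd * sqrtd : ℤ√(p : ℤ)) = p := by rw [dmuld, Int.cast_natCast]
      constructor
      · linear_combination p * ha
      · linear_combination sqrtd * hb - 2 * v * hs
    rw [← hx] at h
    simp only [elt_zero_right, map_mul, map_natCast, map_ofNat] at h
    rw [map_mul, map_mul, algebraMap_eltInt, map_natCast, map_natCast]
    push_cast
    linear_combination h
  refine IsCoprime.dvd_of_dvd_mul_left (Nat.Coprime.cast ?_) hdvd
  refine hq.coprime_iff_not_dvd.2 fun h => hqp ?_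
  refine hq.dvd_of_dvd_pow (n := 3) (h.trans ⟨p, by ring⟩)

include S in
theorem exists_natCast_eq_of_isVirtualUnit (hp : p.Prime) {n : ℕ} (hn : n ≠ 0)
    (h : IsVirtualUnit (𝓞 K) (n : K)) :
    ∃ γ : K, γ ≠ 0 ∧ S.conj γ = γ ∧ (n = γ ^ 2 ∨ n = 2 * γ ^ 2) := by
  obtain ⟨a, b, hab, ha⟩ := Nat.sq_mul_squarefree n
  have hb0 : (b : K) ≠ 0 := Nat.cast_ne_zero.2 (by rintro rfl; simp [← hab] at hn)
  have hav : IsVirtualUnit (𝓞 K) (algebraMap (𝓞 K) K a) := by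
    rwa [← isVirtualUnit_mul_sq_iff hb0, map_natCast, mul_comm, ← Nat.cast_pow, ← Nat.cast_mul, hab]
  have hdvd := dvd_of_squarefree_of_isSquare_span (mul_ne_zero two_ne_zero hp.ne_zero)
    (fun q hq => S.isRadical_natCast_of_not_dvd hq) ha (isVirtualUnit_algebraMap_iff.1 hav)
  have hp4 := S.root_pow
  have hroot : S.root ≠ 0 := pow_ne_zero_iff four_ne_zero |>.1 (hp4 ▸ Nat.cast_ne_zero.2 hp.ne_zero)
  have hconj : S.conj (b * S.root ^ 2) = b * S.root ^ 2 := by simp [S.conj_root]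
  have hbr : (b * S.root ^ 2 : K) ≠ 0 := mul_ne_zero hb0 (pow_ne_zero 2 hroot)
  obtain ⟨c, e, hc, he, rfl⟩ := Nat.dvd_mul.1 hdvd
  rw [← hab]
  obtain rfl | rfl := (Nat.dvd_prime Nat.prime_two).1 hc <;>
    obtain rfl | rfl := (Nat.dvd_prime hp).1 he <;> push_cast
  · exact ⟨b, hb0, map_natCast _ _, .inl (by ring)⟩
  · exact ⟨b * S.root ^ 2, hbr, hconj, .inl (by rw [← hp4]; ring)⟩
  · exact ⟨b, hb0, map_natCast _ _, .inr (by ring)⟩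
  · exact ⟨b * S.root ^ 2, hbr, hconj, .inr (by rw [← hp4]; ring)⟩

end Presentation

theorem legendreSym_neg_one {p : ℕ} [Fact p.Prime] (hp : p % 4 = 3) : legendreSym p (-1) = -1 := by
  rw [legendreSym.at_neg_one (by rintro rfl; contradiction), ZMod.χ₄_nat_three_mod_four hp]

theorem legendreSym_neg_two {p : ℕ} [Fact p.Prime] (hp : p % 8 = 7) : legendreSym p (-2) = -1 := by
  rw [legendreSym.at_neg_two (by rintro rfl; contradiction), ZMod.χ₈'_nat_eq_if_mod_eight]
  simp [hp, (Nat.odd_of_mod_four_eq_three (by lia : p % 4 = 3))]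

namespace Presentation

variable {p : ℕ} {K : Type*} [Field K] [NumberField K] (S : Presentation p K)

theorem exists_norm_eq_sq_of_isVirtualUnit_elt [Fact p.Prime] (hp : p % 4 = 3) {u v : ℤ√(p : ℤ)}
    (h : IsVirtualUnit (𝓞 K) (S.elt u v)) :
    ∃ n : ℕ, (u ^ 2 - sqrtd * v ^ 2).norm = (n : ℤ) ^ 2 := by
  obtain ⟨n, hn⟩ := exists_norm_sq_eq_of_isVirtualUnit (x := S.eltInt u v) h
  rw [algebraMap_eltInt, norm_elt] at hn
  have habs : |(u ^ 2 - sqrtd * v ^ 2).norm| = (n : ℤ) ^ 2 := by exact_mod_cast hn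
  obtain hpos | hneg := abs_choice (u ^ 2 - sqrtd * v ^ 2).norm
  · exact ⟨n, hpos.symm.trans habs⟩
  · have hneg : (u ^ 2 - sqrtd * v ^ 2).norm = -1 * (n : ℤ) ^ 2 := by lia
    have := eq_zero_of_norm_eq_mul_sq (legendreSym_neg_one hp) hneg
    exact ⟨n, by rw [hneg, this]; rfl⟩

theorem exists_mul_sq_eq_elt (x : K) :
    ∃ D : ℤ, D ≠ 0 ∧ ∃ u v : ℤ√(p : ℤ), x * (D : K) ^ 2 = S.elt u v := by
  obtain ⟨D, hD, u, v, h⟩ := S.exists_intCast_mul_eq_elt x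
  refine ⟨D, hD, D * u, D * v, ?_⟩
  simp only [elt, map_mul, map_intCast] at h ⊢
  linear_combination (D : K) * h

theorem exists_mul_conj_elt_eq_of_isVirtualUnit [Fact p.Prime] (hp : p % 4 = 3) {u v : ℤ√(p : ℤ)}
    (h0 : S.elt u v ≠ 0) (h : IsVirtualUnit (𝓞 K) (S.elt u v)) :
    ∃ g : K, S.conj g = g ∧
      (S.elt u v * S.conj (S.elt u v) = g ^ 2 ∨ S.elt u v * S.conj (S.elt u v) = 2 * g ^ 2) := by
  obtain ⟨n, hn⟩ := S.exists_norm_eq_sq_of_isVirtualUnit_elt hp h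
  have hnorm0 : (u ^ 2 - sqrtd * v ^ 2).norm ≠ 0 := by
    rw [← Int.cast_ne_zero (α := ℚ), ← S.norm_elt]
    exact Algebra.norm_ne_zero_iff.2 h0
  have hre : 0 < (u ^ 2 - sqrtd * v ^ 2).re :=
    re_sq_sub_pos (mod_cast (Fact.out : p.Prime).pos)
      (lt_of_le_of_ne (hn ▸ sq_nonneg _) hnorm0.symm)
  have hvirt := h.mul (S.isVirtualUnit_conj h)
  have hf0 := mul_ne_zero h0 ((map_ne_zero S.conj).2 h0)
  rw [elt_mul_conj_elt] at hvirt hf0 ⊢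
  set f := u ^ 2 - sqrtd * v ^ 2
  obtain ⟨m, hm⟩ := Int.eq_ofNat_of_zero_le (show 0 ≤ 2 * (f.re + n) by positivity)
  have hmf : (m : K) * S.ofZsqrtd f = S.ofZsqrtd (f + n) ^ 2 := by
    have := congrArg S.ofZsqrtd (two_mul_add_mul_eq_sq hn)
    rwa [map_mul, map_pow, map_intCast, hm, Int.cast_natCast] at this
  have hmvirt : IsVirtualUnit (𝓞 K) (m : K) := by
    rw [← isVirtualUnit_mul_sq_iff hf0, sq, ← mul_assoc, hmf]
    exact (isVirtualUnit_sq _).mul hvirt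
  obtain ⟨γ, hγ, hconj, hm | hm⟩ :=
    S.exists_natCast_eq_of_isVirtualUnit Fact.out (by lia) hmvirt <;> rw [hm] at hmf
  · exact ⟨S.ofZsqrtd (f + n) / γ, by rw [map_div₀, hconj, conj_ofZsqrtd],
      .inl (by rw [div_pow, ← hmf, mul_div_cancel_left₀ _ (pow_ne_zero 2 hγ)])⟩
  · refine ⟨S.ofZsqrtd (f + n) / (2 * γ), ?_, .inr ?_⟩
    · rw [map_div₀, map_mul, map_ofNat, hconj, conj_ofZsqrtd]
    · rw [div_pow, ← hmf]
      field_simp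

theorem exists_mul_conj_eq_of_isVirtualUnit [Fact p.Prime] (hp : p % 4 = 3) {α : K} (hα : α ≠ 0)
    (h : IsVirtualUnit (𝓞 K) α) :
    ∃ g : K, S.conj g = g ∧ (α * S.conj α = g ^ 2 ∨ α * S.conj α = 2 * g ^ 2) := by
  obtain ⟨D, hD, u, v, huv⟩ := S.exists_mul_sq_eq_elt α
  have hD0 : (D : K) ≠ 0 := Int.cast_ne_zero.2 hD
  obtain ⟨g, hg, hmul⟩ := S.exists_mul_conj_elt_eq_of_isVirtualUnit hp (u := u) (v := v)
    (huv ▸ mul_ne_zero hα (pow_ne_zero 2 hD0)) (by rwa [← huv, isVirtualUnit_mul_sq_iff hD0])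
  rw [← huv, map_mul, map_pow, map_intCast] at hmul
  refine ⟨g / D ^ 2, by rw [map_div₀, hg, map_pow, map_intCast], hmul.imp ?_ ?_⟩ <;>
  · intro h
    field_simp
    linear_combination h

end Presentation

theorem norm_eq_mul_sq_of_abs_norm_eq {p : ℕ} [Fact p.Prime] {a : ℤ}
    (ha : legendreSym p (-a) = -1) {f : ℤ√(p : ℤ)} {n : ℤ} (h : |f.norm| = a * n ^ 2) :
    f.norm = a * n ^ 2 := by
  obtain hpos | hneg := abs_choice f.norm
  · exact hpos.symm.trans h
  · have hnorm : f.norm = -a * n ^ 2 := by linarith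
    rw [hnorm, eq_zero_of_norm_eq_mul_sq ha hnorm]
    ring

theorem exists_norm_eq_sq_or_two_mul_sq {p : ℕ} [Fact p.Prime] (hp : p % 8 = 7) {f : ℤ√(p : ℤ)}
    {r k : ℕ} (hr : r ∣ 2 * p) (h : f.norm.natAbs = r * k ^ 2) :
    ∃ f' : ℤ√(p : ℤ), (f' = f ∨ f' = sqrtd * f) ∧
      ∃ n : ℤ, f'.norm = n ^ 2 ∨ f'.norm = 2 * n ^ 2 := by
  have hprime : p.Prime := Fact.out
  have habs : |f.norm| = r * (k : ℤ) ^ 2 := by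
    rw [Int.abs_eq_natAbs, h]
    push_cast
    rfl
  have hsqrtd : |(sqrtd * f).norm| = p * (r * (k : ℤ) ^ 2) := by
    rw [norm_mul, abs_mul, habs]
    simp [norm_def]
  have one {f' : ℤ√(p : ℤ)} {n : ℤ} (h : |f'.norm| = 1 * n ^ 2) : f'.norm = n ^ 2 := by
    rw [norm_eq_mul_sq_of_abs_norm_eq (legendreSym_neg_one (by lia)) h, one_mul]
  have two {f' : ℤ√(p : ℤ)} {n : ℤ} (h : |f'.norm| = 2 * n ^ 2) : f'.norm = 2 * n ^ 2 :=
    norm_eq_mul_sq_of_abs_norm_eq (legendreSym_neg_two hp) h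
  obtain ⟨c, e, hc, he, rfl⟩ := Nat.dvd_mul.1 hr
  obtain rfl | rfl := (Nat.dvd_prime Nat.prime_two).1 hc <;>
    obtain rfl | rfl := (Nat.dvd_prime hprime).1 he
  · exact ⟨f, .inl rfl, k, .inl (one (by rw [habs]; push_cast; ring))⟩
  · exact ⟨sqrtd * f, .inr rfl, e * k, .inl (one (by rw [hsqrtd]; push_cast; ring))⟩
  · exact ⟨f, .inl rfl, k, .inr (two (by rw [habs]; push_cast; ring))⟩
  · exact ⟨sqrtd * f, .inr rfl, e * k, .inr (two (by rw [hsqrtd]; push_cast; ring))⟩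

namespace Presentation

variable {p : ℕ} {K : Type*} [Field K] [NumberField K] (S : Presentation p K)

theorem conjInt_eltInt (u v : ℤ√(p : ℤ)) : S.conjInt (S.eltInt u v) = S.eltInt u (-v) :=
  RingOfIntegers.coe_injective (S.conj_elt u v)

theorem conjInt_eltInt_zero_one : S.conjInt (S.eltInt 0 1) = -S.eltInt 0 1 := by
  refine RingOfIntegers.coe_injective ?_
  simp [elt, S.conj_root]

theorem eltInt_zero_one_dvd : S.eltInt 0 1 ∣ ((2 * p : ℕ) : 𝓞 K) := by
  refine ⟨S.eltInt 0 (2 * sqrtd), RingOfIntegers.coe_injective ?_⟩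
  have hp := S.root_pow
  simp only [map_mul, algebraMap_eltInt, elt, map_natCast, map_zero, map_one, map_ofNat,
    ofZsqrtd_sqrtd]
  push_cast
  linear_combination -2 * hp

theorem norm_eltInt (u v : ℤ√(p : ℤ)) :
    Algebra.norm ℤ (S.eltInt u v) = (u ^ 2 - sqrtd * v ^ 2).norm :=
  Int.cast_injective (α := ℚ) ((Algebra.coe_norm_int _).trans (S.norm_elt u v))

theorem exists_norm_eq_of_isVirtualUnit_ofZsqrtd [Fact p.Prime] (hp : p % 8 = 7) {f : ℤ√(p : ℤ)}
    (hf : f ≠ 0) (h : IsVirtualUnit (𝓞 K) (S.ofZsqrtd f)) :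
    ∃ f' : ℤ√(p : ℤ), (f' = f ∨ f' = sqrtd * f) ∧
      ∃ n : ℤ, f'.norm = n ^ 2 ∨ f'.norm = 2 * n ^ 2 := by
  rw [← elt_zero_right, ← algebraMap_eltInt, isVirtualUnit_algebraMap_iff] at h
  obtain ⟨A, hA⟩ := h
  have hA0 : A ≠ ⊥ := by
    rintro rfl
    rw [Ideal.bot_mul, Ideal.span_singleton_eq_bot, ← RingOfIntegers.coe_eq_zero_iff,
      algebraMap_eltInt, elt_zero_right, map_eq_zero_iff _ S.ofZsqrtd_injective] at hA
    exact hf hA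
  have hconj : A.map S.conjInt = A := by
    refine pow_left_injective two_ne_zero (?_ : A.map S.conjInt ^ 2 = A ^ 2)
    rw [← Ideal.map_pow, sq, ← hA, Ideal.map_span, Set.image_singleton, conjInt_eltInt, neg_zero]
  obtain ⟨r, k, hr, hk⟩ := absNorm_eq_mul_sq_of_map_eq S.conjInt_involutive
    S.conjInt_eltInt_zero_one (dvd_mul_right 2 p) S.eltInt_zero_one_dvd hA0 hconj
  refine exists_norm_eq_sq_or_two_mul_sq hp hr (k := k) (Nat.pow_left_injective two_ne_zero ?_)
  have hnorm := congrArg Ideal.absNorm hA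
  simpa [hk, norm_eltInt, Int.natAbs_mul, sq] using hnorm

end Presentation

namespace Presentation

variable {p : ℕ} {K : Type*} [Field K] [NumberField K] (S : Presentation p K)

theorem exists_eq_ofZsqrtd_mul_sq {x : K} (hx0 : x ≠ 0) (hx : S.conj x = x) :
    ∃ f : ℤ√(p : ℤ), ∃ β : K, β ≠ 0 ∧ x = S.ofZsqrtd f * β ^ 2 := by
  obtain ⟨D, hD, u, h⟩ := S.exists_intCast_mul_eq_ofZsqrtd hx
  have hD0 : (D : K) ≠ 0 := Int.cast_ne_zero.2 hD
  refine ⟨D * u, (D : K)⁻¹, inv_ne_zero hD0, ?_⟩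
  rw [map_mul, map_intCast, ← h]
  field_simp

/-- Hilbert 90 for `α / g`, whose norm to `ℚ(√p)` is `1`. -/
theorem exists_eq_ofZsqrtd_mul_sq_of_mul_conj_eq_sq {α g : K} (hα : α ≠ 0) (hg : S.conj g = g)
    (h : α * S.conj α = g ^ 2) :
    ∃ f : ℤ√(p : ℤ), ∃ β : K, β ≠ 0 ∧ α = S.ofZsqrtd f * β ^ 2 := by
  wlog ht : α + S.conj α + 2 * g ≠ 0 generalizing g
  · refine this (g := -g) (by rw [map_neg, hg]) (by rw [h, neg_sq]) fun ht' => ?_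
    have hg0 : g = 0 := by linear_combination (not_ne_iff.1 ht - ht') / 4
    rw [hg0, zero_pow two_ne_zero, mul_eq_zero, map_eq_zero, or_self] at h
    exact hα h
  have hconj : S.conj (α + S.conj α + 2 * g) = α + S.conj α + 2 * g := by
    simp only [map_add, map_mul, map_ofNat, S.conj_conj, hg]
    ring
  have hsq : α * (α + S.conj α + 2 * g) = (α + g) ^ 2 := by linear_combination h
  obtain ⟨f, β, hβ, hf⟩ := S.exists_eq_ofZsqrtd_mul_sq ht hconj
  have hαg : α + g ≠ 0 := pow_ne_zero_iff two_ne_zero |>.1 (hsq ▸ mul_ne_zero hα ht)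
  refine ⟨f, β * ((α + g) / (α + S.conj α + 2 * g)),
    mul_ne_zero hβ (div_ne_zero hαg ht), ?_⟩
  rw [mul_pow, ← mul_assoc, ← hf, div_pow, ← hsq]
  field_simp

theorem exists_norm_eq_of_mul_conj_eq_sq [Fact p.Prime] (hp : p % 8 = 7) {α g : K} (hα : α ≠ 0)
    (hvirt : IsVirtualUnit (𝓞 K) α) (hg : S.conj g = g) (h : α * S.conj α = g ^ 2) :
    ∃ f : ℤ√(p : ℤ), ∃ β : K, β ≠ 0 ∧ α = S.ofZsqrtd f * β ^ 2 ∧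
      ∃ n : ℤ, f.norm = n ^ 2 ∨ f.norm = 2 * n ^ 2 := by
  obtain ⟨f, β, hβ, rfl⟩ := S.exists_eq_ofZsqrtd_mul_sq_of_mul_conj_eq_sq hα hg h
  have hf0 : f ≠ 0 := by
    rintro rfl
    simp at hα
  rw [isVirtualUnit_mul_sq_iff hβ] at hvirt
  obtain ⟨f', rfl | rfl, hnorm⟩ := S.exists_norm_eq_of_isVirtualUnit_ofZsqrtd hp hf0 hvirt
  · exact ⟨f', β, hβ, rfl, hnorm⟩
  · have hroot : S.root ≠ 0 := pow_ne_zero_iff four_ne_zero |>.1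
      (S.root_pow ▸ Nat.cast_ne_zero.2 (Fact.out : p.Prime).ne_zero)
    refine ⟨_, β / S.root, div_ne_zero hβ hroot, ?_, hnorm⟩
    rw [map_mul, ofZsqrtd_sqrtd]
    field_simp

theorem ofZsqrtd_eq_intCast_mul_sq {f : ℤ√(p : ℤ)} {n : ℤ} (h : f.norm = n ^ 2) :
    ∃ m : ℤ, ∃ β : K, S.ofZsqrtd f = m * β ^ 2 := by
  by_cases hf : S.ofZsqrtd f = 0
  · exact ⟨0, 0, by simp [hf]⟩
  have hn : n ≠ 0 := by
    rintro rfl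
    have hnorm := S.norm_ofZsqrtd f
    rw [h] at hnorm
    exact hf (Algebra.norm_eq_zero_iff.1 (hnorm.trans (by simp)))
  wlog hm : f.re + n ≠ 0 generalizing n
  · exact this (n := -n) (by rw [h, neg_sq]) (neg_ne_zero.2 hn) (by lia)
  have hm0 : ((2 * (f.re + n) : ℤ) : K) ≠ 0 := Int.cast_ne_zero.2 (mul_ne_zero two_ne_zero hm)
  have hmf := congrArg S.ofZsqrtd (two_mul_add_mul_eq_sq h)
  rw [map_mul, map_pow, map_intCast] at hmf
  refine ⟨2 * (f.re + n), S.ofZsqrtd (f + n) / (2 * (f.re + n) : ℤ), ?_⟩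
  rw [div_pow, ← hmf]
  field_simp

end Presentation

/-! ### The filtration of the virtual units -/

/-- The elements `± y ^ 2` of the multiplicative group of a field. -/
def signedSquares (K : Type*) [Field K] : Subgroup Kˣ :=
  Subgroup.zpowers (-1) ⊔ Subgroup.square Kˣ

/-- The elements of the multiplicative group of `K` that are rational up to squares. -/
def rationalClasses (K : Type*) [Field K] [CharZero K] : Subgroup Kˣ :=
  (Units.map (algebraMap ℚ K : ℚ →* K)).range ⊔ Subgroup.square Kˣ

theorem mem_signedSquares {K : Type*} [Field K] {x : Kˣ} :
    x ∈ signedSquares K ↔ ∃ y : Kˣ, x = y ^ 2 ∨ x = -y ^ 2 := by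
  have hneg : ∀ z ∈ Subgroup.zpowers (-1 : Kˣ), z = 1 ∨ z = -1 := by
    rintro _ ⟨n, rfl⟩
    exact (Int.even_or_odd n).imp Even.neg_one_zpow Odd.neg_one_zpow
  rw [signedSquares, Subgroup.mem_sup]
  constructor
  · rintro ⟨z, hz, _, ⟨y, rfl⟩, rfl⟩
    obtain rfl | rfl := hneg z hz
    · exact ⟨y, .inl (by rw [one_mul, sq])⟩
    · exact ⟨y, .inr (by rw [neg_one_mul, sq])⟩
  · rintro ⟨y, rfl | rfl⟩
    · exact ⟨1, one_mem _, y ^ 2, IsSquare.sq y, one_mul _⟩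
    · exact ⟨-1, Subgroup.mem_zpowers _, y ^ 2, IsSquare.sq y, neg_one_mul _⟩

theorem signedSquares_le_ker_toPrincipalIdeal_sup_square {R K : Type*} [CommRing R] [Field K]
    [Algebra R K] [IsFractionRing R K] :
    signedSquares K ≤ (toPrincipalIdeal R K).ker ⊔ Subgroup.square Kˣ :=
  sup_le_sup_right
    (Subgroup.zpowers_le.2 (range_unitsMap_le_ker_toPrincipalIdeal ⟨-1, Units.ext (by simp)⟩)) _

theorem mem_rationalClasses {K : Type*} [Field K] [CharZero K] {x : Kˣ} :
    x ∈ rationalClasses K ↔ ∃ m : ℤ, ∃ y : K, (x : K) = m * y ^ 2 := by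
  rw [rationalClasses, Subgroup.mem_sup]
  constructor
  · rintro ⟨_, ⟨r, rfl⟩, _, ⟨y, rfl⟩, rfl⟩
    refine ⟨(r : ℚ).num * (r : ℚ).den, y / (r : ℚ).den, ?_⟩
    have hden : ((r : ℚ).den : K) ≠ 0 := Nat.cast_ne_zero.2 (r : ℚ).den_nz
    have hr : ((r : ℚ) : K) = (r : ℚ).num / (r : ℚ).den := Rat.cast_def _
    rw [Units.val_mul, Units.val_mul, Units.coe_map, MonoidHom.coe_coe, eq_ratCast, hr]
    push_cast
    field_simp
  · rintro ⟨m, y, h⟩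
    have hm : (m : ℚ) ≠ 0 := by rintro hm; simp [Int.cast_eq_zero.1 hm] at h
    have hy : y ≠ 0 := by rintro rfl; simp at h
    refine ⟨_, ⟨Units.mk0 (m : ℚ) hm, rfl⟩, Units.mk0 y hy * Units.mk0 y hy, ⟨_, rfl⟩, ?_⟩
    ext
    simp [h, sq]

theorem signedSquares_le_rationalClasses {K : Type*} [Field K] [CharZero K] :
    signedSquares K ≤ rationalClasses K := fun x hx => by
  obtain ⟨y, rfl | rfl⟩ := mem_signedSquares.1 hx
  · exact mem_rationalClasses.2 ⟨1, y, by simp⟩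
  · exact mem_rationalClasses.2 ⟨-1, y, by simp⟩

namespace Presentation

variable {p : ℕ} {K : Type*} [Field K] [NumberField K] (S : Presentation p K)

/-- The elements of `Kˣ` whose norm to `ℚ(√p)` is a square in `ℚ(√p)`. -/
def squareNorms : Subgroup Kˣ :=
  (((Units.map (S.conj : K →* K)).eqLocus (MonoidHom.id Kˣ)).map (powMonoidHom 2)).comap
    (MonoidHom.id Kˣ * Units.map (S.conj : K →* K))

theorem mem_squareNorms {x : Kˣ} :
    x ∈ S.squareNorms ↔ ∃ g : K, S.conj g = g ∧ x * S.conj x = g ^ 2 := by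
  rw [squareNorms, Subgroup.mem_comap, Subgroup.mem_map]
  constructor
  · rintro ⟨g, hg, h⟩
    exact ⟨g, congrArg Units.val hg, congrArg Units.val h.symm⟩
  · rintro ⟨g, hg, h⟩
    have hg0 : g ≠ 0 := by
      rintro rfl
      simp at h
    exact ⟨Units.mk0 g hg0, Units.ext hg, Units.ext h.symm⟩

theorem rationalClasses_le_squareNorms : rationalClasses K ≤ S.squareNorms := fun x hx => by
  obtain ⟨m, y, h⟩ := mem_rationalClasses.1 hx
  refine S.mem_squareNorms.2 ⟨m * (y * S.conj y), ?_, ?_⟩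
  · rw [map_mul, map_mul, S.conj_conj, map_intCast, mul_comm y]
  · rw [h, map_mul, map_pow, map_intCast]
    ring

theorem relIndex_squareNorms_dvd_two [Fact p.Prime] (hp : p % 4 = 3) :
    S.squareNorms.relIndex (virtualUnits (𝓞 K) K) ∣ 2 := by
  refine relIndex_dvd_two_of_mul_mem fun a ha b hb ha' hb' => S.mem_squareNorms.2 ?_
  have exists_two {a : Kˣ} (ha : a ∈ virtualUnits (𝓞 K) K) (ha' : a ∉ S.squareNorms) :
      ∃ g : K, S.conj g = g ∧ a * S.conj a = 2 * g ^ 2 := by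
    obtain ⟨g, hg, h | h⟩ :=
      S.exists_mul_conj_eq_of_isVirtualUnit hp a.ne_zero (mem_virtualUnits.1 ha)
    · exact absurd (S.mem_squareNorms.2 ⟨g, hg, h⟩) ha'
    · exact ⟨g, hg, h⟩
  obtain ⟨g, hg, h⟩ := exists_two ha ha'
  obtain ⟨g', hg', h'⟩ := exists_two hb hb'
  refine ⟨2 * (g * g'), by rw [map_mul, map_mul, map_ofNat, hg, hg'], ?_⟩
  rw [Units.val_mul, map_mul]
  linear_combination b * S.conj b * h + 2 * g ^ 2 * h'

theorem relIndex_rationalClasses_dvd_two [Fact p.Prime] (hp : p % 8 = 7) :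
    (rationalClasses K).relIndex (S.squareNorms ⊓ virtualUnits (𝓞 K) K) ∣ 2 := by
  refine relIndex_dvd_two_of_mul_mem fun a ha b hb ha' hb' => mem_rationalClasses.2 ?_
  have exists_two {a : Kˣ} (ha : a ∈ S.squareNorms ⊓ virtualUnits (𝓞 K) K)
      (ha' : a ∉ rationalClasses K) : ∃ f : ℤ√(p : ℤ), ∃ β : K,
      (a : K) = S.ofZsqrtd f * β ^ 2 ∧ ∃ n : ℤ, f.norm = 2 * n ^ 2 := by
    obtain ⟨g, hg, h⟩ := S.mem_squareNorms.1 ha.1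
    obtain ⟨f, β, -, hf, n, hn | hn⟩ :=
      S.exists_norm_eq_of_mul_conj_eq_sq hp a.ne_zero (mem_virtualUnits.1 ha.2) hg h
    · obtain ⟨m, γ, hm⟩ := S.ofZsqrtd_eq_intCast_mul_sq hn
      refine absurd (mem_rationalClasses.2 ⟨m, γ * β, ?_⟩) ha'
      rw [hf, hm]
      ring
    · exact ⟨f, β, hf, n, hn⟩
  obtain ⟨f, β, hf, n, hn⟩ := exists_two ha ha'
  obtain ⟨f', β', hf', n', hn'⟩ := exists_two hb hb'
  obtain ⟨m, γ, hm⟩ := S.ofZsqrtd_eq_intCast_mul_sq (f := f * f') (n := 2 * n * n')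
    (by rw [Zsqrtd.norm_mul, hn, hn']; ring)
  refine ⟨m, γ * β * β', ?_⟩
  rw [map_mul] at hm
  rw [Units.val_mul, hf, hf']
  linear_combination β ^ 2 * β' ^ 2 * hm

include S in
theorem mem_signedSquares_or_two_mul_mem (hp : p.Prime) {x : Kˣ} (hrat : x ∈ rationalClasses K)
    (hvirt : x ∈ virtualUnits (𝓞 K) K) :
    x ∈ signedSquares K ∨ Units.mk0 2 two_ne_zero * x ∈ signedSquares K := by
  obtain ⟨m, y, h⟩ := mem_rationalClasses.1 hrat
  have hm : m ≠ 0 := by rintro rfl; simp at h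
  have hy : y ≠ 0 := by rintro rfl; simp at h
  have hvirt : IsVirtualUnit (𝓞 K) ((m.natAbs : ℕ) : K) := by
    have hm' : IsVirtualUnit (𝓞 K) (m : K) :=
      (isVirtualUnit_mul_sq_iff hy).1 (h ▸ mem_virtualUnits.1 hvirt)
    obtain hs | hs := Int.natAbs_eq m
    · rwa [hs, Int.cast_natCast] at hm'
    · rwa [hs, Int.cast_neg, Int.cast_natCast, isVirtualUnit_neg_iff] at hm'
  obtain ⟨γ, hγ, -, hsq⟩ :=
    S.exists_natCast_eq_of_isVirtualUnit hp (Int.natAbs_ne_zero.2 hm) hvirt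
  have hx : (x : K) = m.natAbs * y ^ 2 ∨ (x : K) = -(m.natAbs * y ^ 2) := by
    obtain hs | hs := Int.natAbs_eq m
    · exact .inl (by rw [h, hs]; simp)
    · exact .inr (by rw [h, hs]; simp)
  refine hsq.imp (fun hsq => mem_signedSquares.2 ⟨Units.mk0 (γ * y) (mul_ne_zero hγ hy), ?_⟩)
    (fun hsq => mem_signedSquares.2 ⟨Units.mk0 (2 * γ * y)
      (mul_ne_zero (mul_ne_zero two_ne_zero hγ) hy), ?_⟩)
  all_goals
    refine hx.imp (fun hx => Units.ext ?_) (fun hx => Units.ext ?_)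
    all_goals
      push_cast [hx, hsq, Units.val_mk0]
      ring

include S in
theorem relIndex_signedSquares_dvd_two (hp : p.Prime) :
    (signedSquares K).relIndex (rationalClasses K ⊓ virtualUnits (𝓞 K) K) ∣ 2 := by
  refine relIndex_dvd_two_of_mul_mem fun a ha b hb ha' hb' => ?_
  have ha2 := (S.mem_signedSquares_or_two_mul_mem hp ha.1 ha.2).resolve_left ha'
  have hb2 := (S.mem_signedSquares_or_two_mul_mem hp hb.1 hb.2).resolve_left hb'
  set t : Kˣ := Units.mk0 2 two_ne_zero
  have ht : t * t ∈ signedSquares K := Subgroup.mem_sup_right ⟨t, rfl⟩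
  have := mul_mem ha2 hb2
  rwa [mul_mul_mul_comm, Subgroup.mul_mem_cancel_left _ ht] at this

end Presentation

section UnitIndex

theorem two_le_rank {K : Type*} [Field K] [NumberField K] (φ : K →+* ℝ)
    (h : 4 ≤ Module.finrank ℚ K) : 2 ≤ Units.rank K := by
  have hreal : ComplexEmbedding.IsReal (Complex.ofRealHom.comp φ) := by
    ext x
    simp
  have : Nonempty {w : InfinitePlace K // w.IsReal} := ⟨⟨InfinitePlace.mk _, _, hreal, rfl⟩⟩
  have hpos : 0 < InfinitePlace.nrRealPlaces K := by
    rw [InfinitePlace.nrRealPlaces]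
    convert @Fintype.card_pos _ (Fintype.ofFinite _) this
  have hcard := InfinitePlace.card_add_two_mul_card_eq_rank K
  have hsum := InfinitePlace.card_eq_nrRealPlaces_add_nrComplexPlaces K
  unfold Units.rank
  lia

theorem exists_surjective_pi_zmod {ι A : Type*} [Finite ι] {_ : AddCommMonoid A} {_ : Module ℤ A}
    (b : Module.Basis ι ℤ A) (n : ℕ) : ∃ f : A →+ (ι → ZMod n), Function.Surjective f :=
  ⟨((Int.castAddHom (ZMod n)).compLeft ι).comp b.equivFun.toAddMonoidHom,
    ZMod.intCast_surjective.comp_left.comp b.equivFun.surjective⟩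

theorem mem_square_of_coe_eq_sq {K : Type*} [Field K] {u : (𝓞 K)ˣ} {y : K}
    (h : algebraMap (𝓞 K) K u = y ^ 2) : u ∈ Subgroup.square (𝓞 K)ˣ := by
  let z : 𝓞 K := ⟨y, IsIntegral.of_pow two_pos (h ▸ (u : 𝓞 K).isIntegral_coe)⟩
  have hu : (u : 𝓞 K) = z * z := RingOfIntegers.coe_injective (by rw [map_mul, ← sq]; exact h)
  obtain ⟨v, hv⟩ := isUnit_of_mul_isUnit_left (hu ▸ u.isUnit)
  exact ⟨v, Units.ext (by rw [hu, Units.val_mul, hv])⟩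

theorem comap_signedSquares_le (K : Type*) [Field K] :
    (signedSquares K).comap (Units.map (algebraMap (𝓞 K) K : 𝓞 K →* K)) ≤
      Units.torsion K ⊔ Subgroup.square (𝓞 K)ˣ := fun u hu => by
  obtain ⟨y, h | h⟩ := mem_signedSquares.1 hu
  · exact Subgroup.mem_sup_right (mem_square_of_coe_eq_sq (congrArg Units.val h))
  · refine Subgroup.mem_sup.2 ⟨-1, ?_, -u, mem_square_of_coe_eq_sq (y := y) ?_, by simp⟩
    · exact (CommGroup.mem_torsion _).2 (isOfFinOrder_iff_pow_eq_one.2 ⟨2, two_pos, by simp⟩)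
    · rw [Units.val_neg, map_neg, neg_eq_iff_eq_neg]
      exact congrArg Units.val h

variable (K : Type*) [Field K] [NumberField K]

theorem two_pow_rank_dvd_index_torsion_sup_square :
    2 ^ Units.rank K ∣ (Units.torsion K ⊔ Subgroup.square (𝓞 K)ˣ).index := by
  obtain ⟨f, hf⟩ := exists_surjective_pi_zmod (Units.basisModTorsion K) 2
  let coords : (𝓞 K)ˣ →* Multiplicative (Fin (Units.rank K) → ZMod 2) :=
    (AddMonoidHom.toMultiplicativeRight f).comp (QuotientGroup.mk' (Units.torsion K))
  have hsurj : Function.Surjective coords := hf.comp (QuotientGroup.mk'_surjective _)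
  have hindex : coords.ker.index = 2 ^ Units.rank K := by
    rw [Subgroup.index_ker, MonoidHom.range_eq_top.2 hsurj, Subgroup.card_top]
    simp [Nat.card_eq_fintype_card]
  rw [← hindex]
  refine Subgroup.index_dvd_of_le (sup_le (fun u hu => ?_) ?_)
  · rw [MonoidHom.mem_ker, MonoidHom.comp_apply, QuotientGroup.mk'_apply,
      (QuotientGroup.eq_one_iff u).2 hu, map_one]
  · rintro _ ⟨v, rfl⟩
    rw [MonoidHom.mem_ker, map_mul]
    exact congrArg Multiplicative.ofAdd
      (funext fun i => CharTwo.add_self_eq_zero ((coords v).toAdd i))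

theorem two_pow_rank_dvd_relIndex_signedSquares :
    2 ^ Units.rank K ∣ (signedSquares K).relIndex
      (Units.map (algebraMap (𝓞 K) K : 𝓞 K →* K)).range := by
  rw [← Subgroup.index_comap]
  exact (two_pow_rank_dvd_index_torsion_sup_square K).trans
    (Subgroup.index_dvd_of_le (comap_signedSquares_le K))

end UnitIndex

namespace Presentation

variable {p : ℕ} {K : Type*} [Field K] [NumberField K] (S : Presentation p K)

include S in
theorem relIndex_signedSquares_virtualUnits_dvd_eight (hp : p.Prime) (hmod : p % 8 = 7) :
    (signedSquares K).relIndex (virtualUnits (𝓞 K) K) ∣ 8 := by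
  have := Fact.mk hp
  have hrational : signedSquares K ≤ rationalClasses K ⊓ virtualUnits (𝓞 K) K :=
    le_inf signedSquares_le_rationalClasses
      (signedSquares_le_ker_toPrincipalIdeal_sup_square.trans
        ker_toPrincipalIdeal_sup_square_le_virtualUnits)
  have hnorms : rationalClasses K ⊓ virtualUnits (𝓞 K) K ≤ S.squareNorms ⊓ virtualUnits (𝓞 K) K :=
    inf_le_inf_right _ S.rationalClasses_le_squareNorms
  have hinf : (rationalClasses K ⊓ virtualUnits (𝓞 K) K).relIndex
      (S.squareNorms ⊓ virtualUnits (𝓞 K) K) =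
        (rationalClasses K).relIndex (S.squareNorms ⊓ virtualUnits (𝓞 K) K) := by
    rw [← Subgroup.inf_relIndex_right (rationalClasses K), ← inf_assoc,
      inf_eq_left.2 S.rationalClasses_le_squareNorms]
  rw [← Subgroup.relIndex_mul_relIndex _ _ _ (hrational.trans hnorms) inf_le_right,
    ← Subgroup.relIndex_mul_relIndex _ _ _ hrational hnorms,
    Subgroup.inf_relIndex_right, hinf]
  exact mul_dvd_mul (mul_dvd_mul (S.relIndex_signedSquares_dvd_two hp)
    (S.relIndex_rationalClasses_dvd_two hmod)) (S.relIndex_squareNorms_dvd_two (by lia))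

include S in
theorem relIndex_ker_toPrincipalIdeal_sup_square_dvd_two (hp : p.Prime) (hmod : p % 8 = 7)
    (hrank : 2 ≤ Units.rank K) :
    ((toPrincipalIdeal (𝓞 K) K).ker ⊔ Subgroup.square Kˣ).relIndex (virtualUnits (𝓞 K) K) ∣ 2 := by
  set E := (Units.map (algebraMap (𝓞 K) K : 𝓞 K →* K)).range
  have hle : E ⊔ signedSquares K ≤ (toPrincipalIdeal (𝓞 K) K).ker ⊔ Subgroup.square Kˣ :=
    sup_le (range_unitsMap_le_ker_toPrincipalIdeal.trans le_sup_left)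
      signedSquares_le_ker_toPrincipalIdeal_sup_square
  have hunits : 4 ∣ (signedSquares K).relIndex (E ⊔ signedSquares K) := by
    rw [Subgroup.relIndex_sup_right]
    exact (pow_dvd_pow 2 hrank).trans (two_pow_rank_dvd_relIndex_signedSquares K)
  have hdvd := S.relIndex_signedSquares_virtualUnits_dvd_eight hp hmod
  rw [← Subgroup.relIndex_mul_relIndex _ _ _ le_sup_right
    (hle.trans ker_toPrincipalIdeal_sup_square_le_virtualUnits)] at hdvd
  exact (Subgroup.relIndex_dvd_of_le_left _ hle).trans
    (Nat.dvd_of_mul_dvd_mul_left four_pos ((mul_dvd_mul_right hunits _).trans hdvd))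

include S in
theorem isCyclic_sylow_classGroup (hp : p.Prime) (hmod : p % 8 = 7) (hrank : 2 ≤ Units.rank K)
    (P : Sylow 2 (ClassGroup (𝓞 K))) : IsCyclic P :=
  isCyclic_sylow_of_card_powMonoidHom_ker_le (card_powMonoidHom_two_ker_classGroup_le
    (S.relIndex_ker_toPrincipalIdeal_sup_square_dvd_two hp hmod hrank)) P

end Presentation

/-! ### Divisibility of the class number by four -/

theorem exists_pow_four_eq_of_isSquare {F : Type*} [Field F] [Finite F]
    (hF : ¬ IsSquare (-1 : F)) {x : F} (hx : IsSquare x) : ∃ c : F, c ^ 4 = x := by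
  classical
  have := Fintype.ofFinite F
  obtain ⟨b, rfl⟩ := hx
  obtain ⟨c, hc⟩ | ⟨c, hc⟩ : IsSquare b ∨ IsSquare (-b) := by
    by_contra! h
    have hmul : quadraticChar F (-1 * b) = 1 := by
      rw [map_mul, quadraticChar_neg_one_iff_not_isSquare.2 hF,
        quadraticChar_neg_one_iff_not_isSquare.2 h.1, neg_one_mul, neg_neg]
    have hb : -1 * b ≠ 0 := fun hb => h.2 (by rw [neg_eq_neg_one_mul, hb]; exact IsSquare.zero)
    exact h.2 (neg_eq_neg_one_mul b ▸ (quadraticChar_one_iff_isSquare hb).1 hmul)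
  · exact ⟨c, by rw [hc]; ring⟩
  · exact ⟨c, by linear_combination (b - c * c) * hc⟩

/-- A prime `q ≡ 3 (mod 8)` with `q ≡ -1 (mod p)` works, by quadratic reciprocity. -/
theorem exists_prime_pow_four_eq {p : ℕ} (hp : p.Prime) (hmod : p % 4 = 3) :
    ∃ q : ℕ, q.Prime ∧ q % 8 = 3 ∧ q ≠ p ∧ ∃ a : ZMod q, a ^ 4 = p := by
  have hp1 := hp.one_lt
  have hcop : Nat.Coprime 8 p :=
    Nat.Coprime.pow_left 3 ((Nat.coprime_primes Nat.prime_two hp).2 (by lia))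
  obtain ⟨k, hk8, hkp⟩ := Nat.chineseRemainder hcop 3 (p - 1)
  have hk : k.Coprime (8 * p) := by
    refine Nat.Coprime.mul_right ?_ ?_
    · rw [Nat.Coprime, hk8.gcd_eq]
      rfl
    · rw [Nat.Coprime, hkp.gcd_eq]
      exact (Nat.coprime_self_sub_left hp1.le).2 (Nat.coprime_one_left p)
  obtain ⟨q, hqp, hq, hqk⟩ := Nat.forall_exists_prime_gt_and_modEq p (by positivity) hk
  have hq8 : q % 8 = 3 := (hqk.of_dvd (dvd_mul_right _ _)).trans hk8
  have hqp' : q ≡ p - 1 [MOD p] := (hqk.of_dvd (dvd_mul_left _ _)).trans hkp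
  have : Fact p.Prime := ⟨hp⟩
  have : Fact q.Prime := ⟨hq⟩
  have hcast : (q : ZMod p) = -1 := by
    rw [(ZMod.natCast_eq_natCast_iff _ _ _).2 hqp', Nat.cast_pred hp.pos, ZMod.natCast_self,
      zero_sub]
  have hsq : IsSquare (p : ZMod q) := by
    by_contra h
    rw [← ZMod.exists_sq_eq_prime_iff_of_mod_four_eq_three hmod (by lia) hqp.ne, hcast,
      ZMod.exists_sq_eq_neg_one_iff] at h
    lia
  exact ⟨q, hq, hq8, hqp.ne', exists_pow_four_eq_of_isSquare
    (by rw [ZMod.exists_sq_eq_neg_one_iff]; lia) hsq⟩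

section NumberField

variable {K : Type*} [Field K] [NumberField K]

theorem isPrincipal_pow_of_classNumber_dvd {n : ℕ} (hn : classNumber K ∣ n)
    (I : (Ideal (𝓞 K))⁰) : ((I : Ideal (𝓞 K)) ^ n).IsPrincipal := by
  obtain ⟨k, rfl⟩ := hn
  have hone : ClassGroup.mk0 (I ^ (classNumber K * k)) = 1 := by
    rw [map_pow, pow_mul, classNumber, pow_card_eq_one, one_pow]
  rw [← SubmonoidClass.coe_pow]
  exact (ClassGroup.mk0_eq_one_iff _).1 hone

theorem absNorm_ker_ringHom_zmod {q : ℕ} [NeZero q] (φ : 𝓞 K →+* ZMod q) :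
    Ideal.absNorm (RingHom.ker φ) = q := by
  rw [Ideal.absNorm_apply, Submodule.cardQuot_apply,
    Nat.card_congr (RingHom.quotientKerEquivOfSurjective (ZMod.ringHom_surjective φ)).toEquiv,
    Nat.card_zmod]

end NumberField

namespace Presentation

variable {p : ℕ} {K : Type*} [Field K] [NumberField K] (S : Presentation p K)

/-- Reduction modulo the prime `(q, ⁴√p - a)`. -/
theorem exists_ringHom_zmod {q : ℕ} [Fact q.Prime] (hq : (4 * p : ZMod q) ≠ 0) {a : ZMod q}
    (ha : a ^ 4 = p) : ∃ φ : 𝓞 K →+* ZMod q, φ (S.eltInt 0 1) = a := by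
  let ψ : ℤ√(p : ℤ) →+* ZMod q :=
    Zsqrtd.lift ⟨a ^ 2, by rw [← pow_add, ha, Int.cast_natCast]⟩
  have hψ : ψ Zsqrtd.sqrtd = a ^ 2 := by simp [ψ]
  choose u v huv using fun x : 𝓞 K => S.exists_eq_elt_of_isIntegral x.isIntegral_coe
  obtain ⟨R, hR⟩ : ∃ R : 𝓞 K → ZMod q, ∀ x, 4 * p * R x = ψ (u x) + ψ (v x) * a :=
    ⟨_, fun x => mul_inv_cancel_left₀ hq _⟩
  have reduce (x : 𝓞 K) (n : ℤ) {u' v' : ℤ√(p : ℤ)}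
      (h : n * algebraMap (𝓞 K) K x = S.elt u' v') : n * R x = ψ u' + ψ v' * a := by
    obtain ⟨hu, hv⟩ := S.intCast_mul_eq_of_intCast_mul_eq_elt (m := 4 * p) (mod_cast huv x) h
    have hu' := congrArg ψ hu
    have hv' := congrArg ψ hv
    simp only [map_mul, map_intCast] at hu' hv'
    push_cast at hu' hv'
    refine mul_left_cancel₀ hq ?_
    linear_combination n * hR x + hu' + a * hv'
  refine ⟨⟨⟨⟨R, ?_⟩, fun x y => ?_⟩, ?_, fun x y => ?_⟩, ?_⟩
  · simpa using reduce 1 1 (u' := 1) (v' := 0) (by simp [elt])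
  · have hxy : (((4 * p) ^ 2 : ℤ) : K) * algebraMap (𝓞 K) K (x * y) =
        S.elt (u x) (v x) * S.elt (u y) (v y) := by
      rw [← huv, ← huv, map_mul]
      push_cast
      ring
    have h := reduce _ _ (hxy.trans (S.elt_mul _ _ _ _))
    simp only [map_add, map_mul, hψ] at h
    push_cast at h
    refine mul_left_cancel₀ (pow_ne_zero 2 hq) (h.trans ?_)
    linear_combination -4 * p * R y * hR x - (ψ (u x) + ψ (v x) * a) * hR y
  · simpa using reduce 0 1 (u' := 0) (v' := 0) (by simp [elt])
  · have hxy : ((4 * p : ℤ) : K) * algebraMap (𝓞 K) K (x + y) =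
        S.elt (u x) (v x) + S.elt (u y) (v y) := by
      rw [← huv, ← huv, map_add]
      push_cast
      ring
    have h := reduce _ _ (hxy.trans (S.elt_add _ _ _ _))
    simp only [map_add] at h
    push_cast at h
    refine mul_left_cancel₀ hq (h.trans ?_)
    linear_combination -hR x - hR y
  · simpa using reduce (S.eltInt 0 1) 1 (u' := 0) (v' := 1) (by simp)

/-- The conjugate of `ker φ` contains `⁴√p + φ (⁴√p)`, hence differs from `ker φ`. -/
theorem isCoprime_conjInt_of_ker_pow_eq {q : ℕ} [Fact q.Prime] {φ : 𝓞 K →+* ZMod q}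
    (hroot : 2 * φ (S.eltInt 0 1) ≠ 0) {n : ℕ} {α : 𝓞 K}
    (hα : RingHom.ker φ ^ n = Ideal.span {α}) : IsCoprime α (S.conjInt α) := by
  have hmax : (RingHom.ker φ).IsMaximal :=
    RingHom.ker_isMaximal_of_surjective φ (ZMod.ringHom_surjective φ)
  obtain ⟨a, ha⟩ := ZMod.intCast_surjective (φ (S.eltInt 0 1))
  have hmem : S.eltInt 0 1 - a ∈ RingHom.ker φ := by
    rw [RingHom.mem_ker, map_sub, map_intCast, ha, sub_self]
  have hle : ¬ (RingHom.ker φ).map S.conjInt ≤ RingHom.ker φ := fun hle => by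
    have h := RingHom.mem_ker.1 (hle (Ideal.mem_map_of_mem S.conjInt hmem))
    rw [map_sub, conjInt_eltInt_zero_one, map_intCast, map_sub, map_neg, map_intCast, ha] at h
    exact hroot (by linear_combination -h)
  have hcop : IsCoprime (RingHom.ker φ) ((RingHom.ker φ).map S.conjInt) :=
    Ideal.isCoprime_iff_sup_eq.2 (hmax.out.2 _ (left_lt_sup.2 hle))
  have hpow := hcop.pow (m := n) (n := n)
  rwa [← Ideal.map_pow, hα, Ideal.map_span, Set.image_singleton,
    Ideal.isCoprime_span_singleton_iff] at hpow

end Presentation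

namespace Presentation

variable {p : ℕ} {K : Type*} [Field K] [NumberField K] (S : Presentation p K)

include S in
theorem oddPartCharRat_norm (hp : p % 16 = 15) {β : K} (hβ : β ≠ 0) :
    oddPartCharRat (Algebra.norm ℚ β) = 1 := by
  obtain ⟨D, hD, u, v, h⟩ := S.exists_mul_sq_eq_elt β
  have hnorm := S.norm_elt u v
  rw [← h, map_mul, map_pow, ← map_intCast (algebraMap ℚ K), Algebra.norm_algebraMap,
    pow_right_comm] at hnorm
  have hne : (u ^ 2 - sqrtd * v ^ 2).norm ≠ 0 := by
    rw [← Int.cast_ne_zero (α := ℚ), ← hnorm]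
    exact mul_ne_zero (Algebra.norm_ne_zero_iff.2 hβ) (by positivity)
  have hX := congrArg oddPartCharRat hnorm
  rwa [map_mul, map_pow, map_pow, oddPartCharRat_intCast, oddPartCharRat_intCast, ← map_pow,
    oddPartChar_sq hD, one_pow, mul_one, oddPartChar_norm_sq_sub (by lia) hne] at hX

theorem oddPartChar_eq_one_of_mul_conj_eq_sq [Fact p.Prime] (hp : p % 16 = 15) {α g : K}
    (hα : α ≠ 0) (hvirt : IsVirtualUnit (𝓞 K) α) (hg : S.conj g = g)
    (h : α * S.conj α = g ^ 2) {n : ℤ} (hn : |Algebra.norm ℚ α| = (n : ℚ) ^ 2) :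
    oddPartChar n = 1 := by
  obtain ⟨f, β, hβ, rfl, m, hm⟩ := S.exists_norm_eq_of_mul_conj_eq_sq (by lia) hα hvirt hg h
  have hf0 : f.norm ≠ 0 := S.norm_ne_zero fun hf => hα (by rw [hf, map_zero, zero_mul])
  have hf : oddPartChar f.norm = 1 := by
    have hm0 : m ≠ 0 := by
      rintro rfl
      simp_all
    obtain hm | hm := hm
    · rw [hm, oddPartChar_sq hm0]
    · rw [hm, map_mul, oddPartChar_two, oddPartChar_sq hm0, one_mul]
  have hsq : (f.norm * Algebra.norm ℚ β) ^ 2 = (n : ℚ) ^ 2 := by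
    rw [← hn, map_mul, map_pow, norm_ofZsqrtd, ← mul_pow, abs_sq]
  have hX : oddPartCharRat (f.norm * Algebra.norm ℚ β) = 1 := by
    rw [map_mul, oddPartCharRat_intCast, hf, S.oddPartCharRat_norm hp hβ, one_mul]
  obtain h | h := sq_eq_sq_iff_eq_or_eq_neg.1 hsq
  · rwa [h, oddPartCharRat_intCast] at hX
  · rwa [h, ← Int.cast_neg, oddPartCharRat_intCast, oddPartChar_neg] at hX

theorem exists_eq_ofZsqrtd_of_isIntegral {x : K} (hx : IsIntegral ℤ x) (hconj : S.conj x = x) :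
    ∃ u : ℤ√(p : ℤ), 4 * p * x = S.ofZsqrtd u := by
  obtain ⟨u, v, h⟩ := S.exists_eq_elt_of_isIntegral hx
  obtain rfl : v = 0 := S.conj_elt_eq_self_iff.1 (by
    rw [← h, map_mul, map_mul, hconj, map_ofNat, map_natCast])
  exact ⟨u, by rw [h, elt_zero_right]⟩

theorem exists_mul_add_mul_eq_of_isCoprime_conjInt {α : 𝓞 K} (hcop : IsCoprime α (S.conjInt α))
    {u v : ℤ√(p : ℤ)} (h : 4 * p * algebraMap (𝓞 K) K α = S.elt u v) :
    ∃ w w' : ℤ√(p : ℤ), w * u + w' * v = 2 ^ 4 * (p : ℤ√(p : ℤ)) ^ 2 := by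
  obtain ⟨A, B, hAB⟩ := hcop
  obtain ⟨x, x', hA⟩ := S.exists_eq_elt_of_isIntegral A.isIntegral_coe
  obtain ⟨y, y', hB⟩ := S.exists_eq_elt_of_isIntegral B.isIntegral_coe
  have hconj : 4 * p * S.conj (algebraMap (𝓞 K) K α) = S.elt u (-v) := by
    rw [← conj_elt, ← h, map_mul, map_mul, map_ofNat, map_natCast]
  have hbez := congrArg (algebraMap (𝓞 K) K) hAB
  rw [map_add, map_mul, map_mul, algebraMap_conjInt, map_one] at hbez
  have helt : S.elt x x' * S.elt u v + S.elt y y' * S.elt u (-v) = S.elt (2 ^ 4 * p ^ 2) 0 := by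
    rw [← hA, ← hB, ← hconj, ← h, elt_zero_right]
    simp only [map_mul, map_pow, map_ofNat, map_natCast]
    linear_combination (2 ^ 4 * p ^ 2 : K) * hbez
  rw [elt_mul, elt_mul, elt_add] at helt
  exact ⟨x + y, sqrtd * (x' - y'), by rw [← (S.elt_inj.1 helt).1]; ring⟩

theorem ne_zero_of_isCoprime_conjInt (hp : p ≠ 0) {α : 𝓞 K} (hcop : IsCoprime α (S.conjInt α))
    (hα : ¬ IsUnit α) {u v : ℤ√(p : ℤ)} (h : 4 * p * algebraMap (𝓞 K) K α = S.elt u v) :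
    v ≠ 0 := by
  intro hv
  have hscale : 4 * (p : K) ≠ 0 := mul_ne_zero (by norm_num) (Nat.cast_ne_zero.2 hp)
  have hconj : S.conj (S.elt u v) = S.elt u v := S.conj_elt_eq_self_iff.2 hv
  rw [← h, map_mul, map_mul, map_ofNat, map_natCast, mul_right_inj' hscale,
    ← algebraMap_conjInt] at hconj
  rw [RingOfIntegers.coe_injective hconj, isCoprime_self] at hcop
  exact hα hcop

theorem exists_sq_sub_eq_two_mul_sq {α : 𝓞 K} {g : K} (hg : S.conj g = g)
    (h : algebraMap (𝓞 K) K α * S.conj (algebraMap (𝓞 K) K α) = 2 * g ^ 2) {u v : ℤ√(p : ℤ)}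
    (huv : 4 * p * algebraMap (𝓞 K) K α = S.elt u v) :
    ∃ e : ℤ√(p : ℤ), 4 * p * (2 * g) = S.ofZsqrtd e ∧
      (2 * u) ^ 2 - sqrtd * (2 * v) ^ 2 = 2 * e ^ 2 := by
  have hint : IsIntegral ℤ (2 * g) := by
    refine IsIntegral.of_pow two_pos ?_
    have hsq : (2 * g) ^ 2 = algebraMap (𝓞 K) K (2 * (α * S.conjInt α)) := by
      rw [map_mul, map_mul, algebraMap_conjInt, h, map_ofNat]
      ring
    exact hsq ▸ RingOfIntegers.isIntegral_coe _
  obtain ⟨e, he⟩ := S.exists_eq_ofZsqrtd_of_isIntegral hint (by rw [map_mul, hg, map_ofNat])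
  refine ⟨e, he, S.ofZsqrtd_injective ?_⟩
  have huv' := S.elt_mul_conj_elt u v
  rw [← huv, map_mul, map_mul, map_ofNat, map_natCast, map_sub, map_mul, map_pow, map_pow] at huv'
  simp only [map_sub, map_mul, map_pow, map_ofNat, ← he]
  linear_combination 64 * (p : K) ^ 2 * h - 4 * huv'

include S in
theorem norm_intCast (n : ℤ) : Algebra.norm ℚ (n : K) = (n : ℚ) ^ 4 := by
  rw [← map_intCast S.ofZsqrtd, norm_ofZsqrtd, Zsqrtd.norm_intCast]
  push_cast
  ring

theorem oddPartChar_norm_eq_of_mul_conj_eq_two_mul_sq (hp : p ≠ 0) {α g : K}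
    (h : α * S.conj α = 2 * g ^ 2) {n : ℤ} (hn : |Algebra.norm ℚ α| = (n : ℚ) ^ 2)
    {e : ℤ√(p : ℤ)} (he : 4 * p * (2 * g) = S.ofZsqrtd e) :
    oddPartChar e.norm = oddPartChar n := by
  have hnorm_g : (n : ℚ) ^ 4 = 2 ^ 4 * Algebra.norm ℚ g ^ 2 := by
    have h2 := S.norm_intCast 2
    have hnorm := congrArg (Algebra.norm ℚ) h
    push_cast at h2
    rw [map_mul, Algebra.norm_eq_of_algEquiv S.conj α, map_mul, h2, map_pow, ← sq, ← sq_abs,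
      hn] at hnorm
    rw [← hnorm]
    ring
  have hnorm_e : (e.norm : ℚ) ^ 2 = (8 * p) ^ 4 * Algebra.norm ℚ g := by
    have h8 : 4 * (p : K) * (2 * g) = (8 * p : ℤ) * g := by
      push_cast
      ring
    rw [← S.norm_ofZsqrtd, ← he, h8, map_mul, S.norm_intCast]
    push_cast
    rfl
  have hpow : (e.norm : ℚ) ^ 4 = (2 ^ 5 * p ^ 2 * n) ^ 4 := by
    linear_combination (e.norm ^ 2 + (8 * p) ^ 4 * Algebra.norm ℚ g) * hnorm_e -
      2 ^ 20 * p ^ 8 * hnorm_g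
  have hX : oddPartChar (2 ^ 5 * p ^ 2 * n) = oddPartChar n := by
    rw [map_mul, map_mul, map_pow, oddPartChar_two, oddPartChar_sq (mod_cast hp), one_pow, one_mul,
      one_mul]
  have hpow' : e.norm ^ 4 = (2 ^ 5 * (p : ℤ) ^ 2 * n) ^ 4 := by exact_mod_cast hpow
  obtain h | h | ⟨h, -⟩ := pow_eq_pow_iff_cases.1 hpow'
  · exact absurd h four_ne_zero
  · rw [h, hX]
  · rw [h, oddPartChar_neg, hX]

theorem oddPartChar_eq_one_of_mul_conj_eq_two_mul_sq [Fact p.Prime] (hp : p % 16 = 15) {α : 𝓞 K}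
    {g : K} (hcop : IsCoprime α (S.conjInt α)) (hα : ¬ IsUnit α) (hg : S.conj g = g)
    (h : algebraMap (𝓞 K) K α * S.conj (algebraMap (𝓞 K) K α) = 2 * g ^ 2) {n : ℤ}
    (hn : |Algebra.norm ℚ (algebraMap (𝓞 K) K α)| = (n : ℚ) ^ 2) : oddPartChar n = 1 := by
  have hp0 : p ≠ 0 := by lia
  obtain ⟨u, v, huv⟩ := S.exists_eq_elt_of_isIntegral α.isIntegral_coe
  obtain ⟨w, w', hw⟩ := S.exists_mul_add_mul_eq_of_isCoprime_conjInt hcop huv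
  obtain ⟨e, he, hsq⟩ := S.exists_sq_sub_eq_two_mul_sq hg h huv
  have hX := S.oddPartChar_norm_eq_of_mul_conj_eq_two_mul_sq hp0 h hn he
  have hv : v ≠ 0 := S.ne_zero_of_isCoprime_conjInt hp0 hcop hα huv
  have hv2 : (2 * v).norm ≠ 0 := by
    rw [Zsqrtd.norm_mul]
    exact mul_ne_zero (by simp [norm_def]) (S.norm_ne_zero hv)
  have hw' : w * (2 * u) + w' * (2 * v) = 2 ^ 5 * ((p : ℤ) : ℤ√(p : ℤ)) ^ 2 := by
    push_cast
    linear_combination 2 * hw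
  have he0 : e.norm ≠ 0 := S.norm_ne_zero fun he0 => hv (S.conj_elt_eq_self_iff.1 (by
    have hg0 : g = 0 := by simpa [he0, hp0] using he
    have hα0 : α = 0 := by simpa [hg0] using h
    rw [← huv, hα0, map_zero, mul_zero, map_zero]) : v = 0)
  rw [← hX, ← oddPartChar_norm_eq_of_sq_sub_eq (by lia) hsq he0]
  refine oddPartChar_norm_of_sq_sub_eq (fun l hl hlp => ?_) hsq hw' hv2
  rw [(Nat.prime_dvd_prime_iff_eq hl Fact.out).1 (Int.natCast_dvd_natCast.1 hlp)]
  exact oddPartChar_eq_one (by lia)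

end Presentation

namespace Presentation

variable {p : ℕ} {K : Type*} [Field K] [NumberField K] (S : Presentation p K)

theorem not_isPrincipal_ker_pow (hp : p.Prime) (hmod : p % 16 = 15) {q : ℕ} [Fact q.Prime]
    (hq : q % 8 = 3) {φ : 𝓞 K →+* ZMod q} (hroot : 2 * φ (S.eltInt 0 1) ≠ 0) {m : ℕ}
    (hm : Odd m) : ¬ (RingHom.ker φ ^ (2 * m)).IsPrincipal := by
  rintro ⟨α, hα⟩
  rw [Ideal.submodule_span_eq] at hα
  have : Fact p.Prime := ⟨hp⟩
  have hq1 : 1 < q := (Fact.out : q.Prime).one_lt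
  have hX : oddPartChar (q ^ m : ℤ) = -1 := by
    rw [map_pow, oddPartChar_eq_neg_one (by lia), hm.neg_one_pow]
  have habs : Ideal.absNorm (Ideal.span {α}) = q ^ (2 * m) := by
    rw [← hα, map_pow, absNorm_ker_ringHom_zmod]
  have hnorm : |Algebra.norm ℚ (algebraMap (𝓞 K) K α)| = ((q ^ m : ℤ) : ℚ) ^ 2 := by
    rw [← Algebra.coe_norm_int, ← Int.cast_abs, Int.abs_eq_natAbs, ← Ideal.absNorm_span_singleton,
      habs]
    push_cast
    ring
  have hα0 : algebraMap (𝓞 K) K α ≠ 0 := fun h => by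
    rw [h, Algebra.norm_zero, abs_zero] at hnorm
    exact pow_ne_zero 2 (mod_cast pow_ne_zero m (by lia)) hnorm.symm
  have hunit : ¬ IsUnit α := fun h => by
    rw [Ideal.span_singleton_eq_top.2 h, Ideal.absNorm_top] at habs
    exact (Nat.one_lt_pow (mul_ne_zero two_ne_zero hm.pos.ne') hq1).ne habs
  have hvirt : IsVirtualUnit (𝓞 K) (algebraMap (𝓞 K) K α) :=
    isVirtualUnit_algebraMap_iff.2 ⟨RingHom.ker φ ^ m, by rw [← hα, two_mul, pow_add]⟩
  obtain ⟨g, hg, h | h⟩ := S.exists_mul_conj_eq_of_isVirtualUnit (by lia) hα0 hvirt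
  · have := S.oddPartChar_eq_one_of_mul_conj_eq_sq hmod hα0 hvirt hg h hnorm
    simp [hX] at this
  · have := S.oddPartChar_eq_one_of_mul_conj_eq_two_mul_sq hmod
      (S.isCoprime_conjInt_of_ker_pow_eq hroot hα) hunit hg h hnorm
    simp [hX] at this

include S in
theorem four_dvd_classNumber (hp : p.Prime) (hmod : p % 16 = 15) : 4 ∣ classNumber K := by
  by_contra hcon
  obtain ⟨m, hm, hdvd⟩ : ∃ m, Odd m ∧ classNumber K ∣ 2 * m := by
    obtain ⟨m, hm | hm⟩ := (classNumber K).even_or_odd'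
    · exact ⟨m, by grind, hm.dvd⟩
    · exact ⟨classNumber K, ⟨m, hm⟩, dvd_mul_left _ _⟩
  obtain ⟨q, hq, hq8, hqp, a, ha⟩ := exists_prime_pow_four_eq hp (by lia)
  have : Fact q.Prime := ⟨hq⟩
  have h2 : (2 : ZMod q) ≠ 0 := by
    rw [← Nat.cast_two, Ne, ZMod.natCast_eq_zero_iff, Nat.prime_dvd_prime_iff_eq hq Nat.prime_two]
    lia
  have hp0 : (p : ZMod q) ≠ 0 := by
    rwa [Ne, ZMod.natCast_eq_zero_iff, Nat.prime_dvd_prime_iff_eq hq hp]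
  have ha0 : a ≠ 0 := fun h => hp0 (by rw [← ha, h, zero_pow four_ne_zero])
  have h4 : (4 : ZMod q) ≠ 0 := by
    rw [show (4 : ZMod q) = 2 ^ 2 by norm_num]
    exact pow_ne_zero 2 h2
  obtain ⟨φ, rfl⟩ := S.exists_ringHom_zmod (mul_ne_zero h4 hp0) ha
  have hker : RingHom.ker φ ∈ (Ideal (𝓞 K))⁰ := mem_nonZeroDivisors_of_ne_zero fun h => by
    have hnorm := absNorm_ker_ringHom_zmod φ
    rw [h, Ideal.zero_eq_bot, Ideal.absNorm_bot] at hnorm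
    exact hq.ne_zero hnorm.symm
  exact S.not_isPrincipal_ker_pow hp hmod hq8 (mul_ne_zero h2 ha0) hm
    (isPrincipal_pow_of_classNumber_dvd hdvd ⟨_, hker⟩)

include S in
theorem finrank_eq_four : Module.finrank ℚ K = 4 := by
  rw [Module.finrank_eq_card_basis S.basis, Fintype.card_fin]

end Presentation

theorem adjoinRoot_root_pow {R : Type*} [CommRing R] (n : ℕ) (a : R) :
    AdjoinRoot.root (X ^ n - C a) ^ n = algebraMap R _ a := by
  have h := AdjoinRoot.eval₂_root (X ^ n - C a)
  rwa [eval₂_sub, eval₂_pow, eval₂_X, eval₂_C, sub_eq_zero] at h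

theorem nonempty_presentation {p : ℕ} {K : Type*} [Field K] [NumberField K]
    (e : K ≃ₐ[ℚ] AdjoinRoot (X ^ 4 - C (p : ℚ))) : Nonempty (Presentation p K) := by
  let pb := AdjoinRoot.powerBasis' (monic_X_pow_sub_C (p : ℚ) four_ne_zero)
  have hdim : pb.dim = 4 := natDegree_X_pow_sub_C
  let root : K := e.symm (AdjoinRoot.root _)
  have hroot : root ^ 4 = p := by
    rw [← map_pow, adjoinRoot_root_pow, AlgEquiv.commutes, map_natCast]
  let basis : Module.Basis (Fin 4) ℚ K :=
    (pb.basis.reindex (finCongr hdim)).map e.symm.toLinearEquiv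
  let conj : K →ₐ[ℚ] K :=
    (AdjoinRoot.liftAlgHom _ (Algebra.ofId ℚ K) (-root)
      (by simp [Even.neg_pow (by decide : Even 4), hroot])).comp e.toAlgHom
  exact ⟨⟨root, hroot, basis, fun i => by simp [basis, root, pb],
    AlgEquiv.ofBijective conj (Algebra.IsAlgebraic.algHom_bijective conj),
    by simp [conj, root]⟩⟩

theorem nonempty_ringHom_real {n : ℕ} (hn : n ≠ 0) {a : ℚ} (ha : 0 ≤ a) :
    Nonempty (AdjoinRoot (X ^ n - C a) →+* ℝ) :=
  ⟨AdjoinRoot.lift (algebraMap ℚ ℝ) ((a : ℝ) ^ (n : ℝ)⁻¹) (by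
    simp [Real.rpow_inv_natCast_pow (Rat.cast_nonneg.2 ha) hn])⟩

end PureQuartic

theorem pure_quartic_classGroup_cyclic_and_four_dvd_general
    (p : ℕ) (hp : p.Prime) (hmod : p % 8 = 7)
    (K : Type*) [Field K] [NumberField K]
    (hK : Nonempty (K ≃ₐ[ℚ] AdjoinRoot (X ^ 4 - C (p : ℚ)))) :
    (∀ P : Sylow 2 (ClassGroup (𝓞 K)), IsCyclic P) ∧ (p % 16 = 15 → 4 ∣ classNumber K) := by
  obtain ⟨e⟩ := hK
  obtain ⟨S⟩ := PureQuartic.nonempty_presentation e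
  obtain ⟨φ⟩ := PureQuartic.nonempty_ringHom_real four_ne_zero p.cast_nonneg
  have hrank : 2 ≤ NumberField.Units.rank K :=
    PureQuartic.two_le_rank (φ.comp e) S.finrank_eq_four.ge
  exact ⟨S.isCyclic_sylow_classGroup hp hmod hrank, S.four_dvd_classNumber hp⟩

/-- For a prime `p ≡ -1 (mod 16)` and `K = ℚ(⁴√p)`, the 2-primary part
of the ideal class group of `K` is cyclic and `4` divides the class number of `K`. -/
theorem pure_quartic_classGroup_cyclic_and_four_dvd
    (p : ℕ) (hp : p.Prime) (hmod : p % 16 = 15)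
    (K : Type*) [Field K] [NumberField K]
    (hK : Nonempty (K ≃ₐ[ℚ] AdjoinRoot (X ^ 4 - C (p : ℚ)))) :
    (∀ P : Sylow 2 (ClassGroup (𝓞 K)), IsCyclic P) ∧ 4 ∣ classNumber K := by
  obtain ⟨hcyclic, hfour⟩ :=
    pure_quartic_classGroup_cyclic_and_four_dvd_general p hp (by lia) K hK
  exact ⟨hcyclic, hfour hmod⟩
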